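/- Let Ω ⊂ ℝ^d have positive finite measure and p > 1. Then there exists an unconditional Schauder frame {(g_n, g_n*)} in L^p(Ω) such that each g_n satisfies |g_n(x)| = 1 almost everywhere on Ω. -/

import Mathlib

open MeasureTheory

open Set Filter Topology ENNReal

/-!
A Haar system of `X` is an unconditional basis of `L^p`, by Burkholder's inequality for martingale
transforms, and its members are bounded by `1`. Write a function `h` with `‖h‖ ≤ 1` as the average
of the unimodular functions `h ± r k • d`, where `d` is orthogonal to `h` pointwise,
`‖h‖ ^ 2 + ‖d‖ ^ 2 = 1`, and `r 0, …, r (N - 1)` are orthogonal signs. Partial sums of these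
functions are multiples of `h` up to an error `∑ ± r k • d` of norm `o(N)`, so that for large `N`
each term of the Haar expansion can be split into a block of unimodular functions without
affecting unconditional convergence.
-/

/-! ### Burkholder functions -/

section Concave

variable {f : ℝ → ℝ}

lemma exists_supergradient_of_concaveOn (hf : ConcaveOn ℝ univ f) (x : ℝ) :
    ∃ k, ∀ y, f y ≤ f x + k * (y - x) := by
  have hx : x ∈ interior (univ : Set ℝ) := by simp
  have hg : ConvexOn ℝ univ (-f) := hf.neg
  refine ⟨-derivWithin (-f) (Ioi x) x, fun y => ?_⟩
  rcases lt_trichotomy y x with h | rfl | h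
  · have := (hg.slope_le_leftDeriv_of_mem_interior (mem_univ y) hx h).trans
      (hg.leftDeriv_le_rightDeriv_of_mem_interior hx)
    rw [slope_def_field, div_le_iff₀ (sub_pos.2 h)] at this
    simp only [Pi.neg_apply] at this
    linarith
  · simp
  · have := hg.rightDeriv_le_slope_of_mem_interior hx (mem_univ y) h
    rw [slope_def_field, le_div_iff₀ (sub_pos.2 h)] at this
    simp only [Pi.neg_apply] at this
    linarith

lemma le_tangent_of_concaveOn {s : Set ℝ} {x y k : ℝ} (hf : ConcaveOn ℝ s f)
    (hk : HasDerivAt f k x) (hx : x ∈ s) (hy : y ∈ s) (hxy : x ≤ y) :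
    f y ≤ f x + k * (y - x) := by
  rcases hxy.eq_or_lt with rfl | h
  · simp
  · have := hf.slope_le_of_hasDerivAt hx hy h hk
    rw [slope_def_field, div_le_iff₀ (sub_pos.2 h)] at this
    linarith

lemma concaveOn_univ_of_le_affine {b c k m : ℝ} (hle : ∀ t, f t ≤ k * t + m)
    (heq : ∀ t ∈ Icc b c, f t = k * t + m) (hbc : b ≤ c)
    (hb : ConcaveOn ℝ (Iic b) f) (hc : ConcaveOn ℝ (Ici c) f) : ConcaveOn ℝ univ f := by
  refine concaveOn_of_slope_anti_adjacent convex_univ fun {x y z} _ _ hxy hyz => ?_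
  have hfb := heq b ⟨le_rfl, hbc⟩
  have hfc := heq c ⟨hbc, le_rfl⟩
  have hx := hle x
  have hy := hle y
  have hz := hle z
  rcases lt_or_ge y b with hyb | hby
  · rcases le_or_gt z b with hzb | hbz
    · exact hb.slope_anti_adjacent (hxy.le.trans hyb.le) hzb hxy hyz
    · refine le_trans ?_ (hb.slope_anti_adjacent (hxy.le.trans hyb.le) self_mem_Iic hxy hyb)
      rw [div_le_div_iff₀ (sub_pos.2 hyz) (sub_pos.2 hyb), hfb]
      nlinarith
  · rcases le_or_gt y c with hyc | hcy
    · have hfy := heq y ⟨hby, hyc⟩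
      trans k
      · rw [div_le_iff₀ (sub_pos.2 hyz)]; linarith
      · rw [le_div_iff₀ (sub_pos.2 hxy)]; linarith
    · rcases le_or_gt c x with hcx | hxc
      · exact hc.slope_anti_adjacent hcx (hcy.le.trans hyz.le) hxy hyz
      · refine (hc.slope_anti_adjacent self_mem_Ici (hcy.le.trans hyz.le) hcy hyz).trans ?_
        rw [div_le_div_iff₀ (sub_pos.2 hcy) (sub_pos.2 hxy), hfc]
        nlinarith

end Concave

lemma rpow_eq_mul_rpow_sub_one {p s : ℝ} (hp : 1 < p) (hs : 0 ≤ s) :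
    s ^ p = s * s ^ (p - 1) := by
  rw [← Real.rpow_one_add' hs (by linarith), add_sub_cancel]

/-- Burkholder's function, for a parameter `a` that is large in terms of `p`. -/
noncomputable def burkholder (p a x y : ℝ) : ℝ := (|y| - a * |x|) * (|x| + |y|) ^ (p - 1)

namespace burkholder

variable {p a : ℝ}

lemma neg_left (x y : ℝ) : burkholder p a (-x) y = burkholder p a x y := by simp [burkholder]

lemma neg_right (x y : ℝ) : burkholder p a x (-y) = burkholder p a x y := by simp [burkholder]

lemma continuous_uncurry (hp : 1 < p) : Continuous (Function.uncurry (burkholder p a)) := by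
  have : Continuous fun s : ℝ => s ^ (p - 1) := Real.continuous_rpow_const (by linarith)
  unfold burkholder Function.uncurry
  fun_prop

lemma apply_mul_le_zero (ha : 1 ≤ a) (x : ℝ) {ε : ℝ} (hε : |ε| = 1) :
    burkholder p a x (ε * x) ≤ 0 := by
  rw [burkholder, abs_mul, hε, one_mul]
  exact mul_nonpos_of_nonpos_of_nonneg (by nlinarith [abs_nonneg x]) (by positivity)

lemma rpow_le (hp : 1 < p) (ha : 0 ≤ a) (x y : ℝ) :
    |y| ^ p ≤ (2 * a * (1 + 2 * a) ^ (p - 1) + (2 * a) ^ p) * |x| ^ p + 2 * burkholder p a x y := by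
  have hx := abs_nonneg x
  have hy := abs_nonneg y
  have hxp : |x| ^ p = |x| * |x| ^ (p - 1) := rpow_eq_mul_rpow_sub_one hp hx
  rw [burkholder]
  rcases le_total (2 * a * |x|) |y| with h | h
  · have h1 : |y| / 2 * |y| ^ (p - 1) ≤ (|y| - a * |x|) * (|x| + |y|) ^ (p - 1) := by
      gcongr
      · linarith
      · linarith
      · linarith
    have h2 : 0 ≤ (2 * a * (1 + 2 * a) ^ (p - 1) + (2 * a) ^ p) * |x| ^ p := by positivity
    rw [rpow_eq_mul_rpow_sub_one hp hy]
    linarith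
  · have h1 : |y| ^ p ≤ (2 * a) ^ p * |x| ^ p := by
      rw [← Real.mul_rpow (by positivity) hx]
      gcongr
    have h2 : a * |x| * (|x| + |y|) ^ (p - 1) ≤ a * (1 + 2 * a) ^ (p - 1) * |x| ^ p := calc
      _ ≤ a * |x| * ((1 + 2 * a) * |x|) ^ (p - 1) := by
        gcongr
        linarith
      _ = _ := by rw [Real.mul_rpow (by positivity) hx, hxp]; ring
    have h3 : 0 ≤ |y| * (|x| + |y|) ^ (p - 1) := by positivity
    linarith

section Line

variable {u t κ : ℝ}

lemma concaveOn_tail (hp : 1 < p) (ha : 1 ≤ a) (hu : 0 ≤ u)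
    (hκ : κ * (p - 2) ≤ (a - 1) * p * u) :
    ConcaveOn ℝ (Ici u) fun s => (1 - a) * s ^ p + κ * s ^ (p - 1) := by
  have hpos : ∀ s ∈ interior (Ici u), 0 < s := fun s hs =>
    hu.trans_lt (by simpa only [interior_Ici, mem_Ioi] using hs)
  refine concaveOn_of_hasDerivWithinAt2_nonpos (convex_Ici u)
    (f' := fun s => (1 - a) * (p * s ^ (p - 1)) + κ * ((p - 1) * s ^ (p - 1 - 1)))
    (f'' := fun s => (1 - a) * (p * ((p - 1) * s ^ (p - 1 - 1))) +
      κ * ((p - 1) * ((p - 1 - 1) * s ^ (p - 1 - 1 - 1)))) ?_ (fun s hs => ?_) (fun s hs => ?_)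
    fun s hs => ?_
  · exact ((continuous_const.mul (Real.continuous_rpow_const (by linarith))).add
      (continuous_const.mul (Real.continuous_rpow_const (by linarith)))).continuousOn
  · have h := Or.inl (b := 1 ≤ p) (hpos s hs).ne'
    have h' := Or.inl (b := 1 ≤ p - 1) (hpos s hs).ne'
    exact (((Real.hasDerivAt_rpow_const h).const_mul _).add
      ((Real.hasDerivAt_rpow_const h').const_mul _)).hasDerivWithinAt
  · have h := Or.inl (b := 1 ≤ p - 1) (hpos s hs).ne'
    have h' := Or.inl (b := 1 ≤ p - 1 - 1) (hpos s hs).ne'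
    exact ((((Real.hasDerivAt_rpow_const h).const_mul _).const_mul _).add
      (((Real.hasDerivAt_rpow_const h').const_mul _).const_mul _)).hasDerivWithinAt
  · have hs0 := hpos s hs
    have hus : u ≤ s := interior_subset hs
    have hX : 0 < s ^ (p - 1 - 1 - 1) := Real.rpow_pos_of_pos hs0 _
    have hmono : (a - 1) * p * u ≤ (a - 1) * p * s :=
      mul_le_mul_of_nonneg_left hus (mul_nonneg (by linarith) (by linarith))
    have hsucc : s ^ (p - 1 - 1) = s * s ^ (p - 1 - 1 - 1) := by
      rw [Real.rpow_sub_one hs0.ne' (p - 1 - 1)]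
      field_simp
    calc _ = -((p - 1) * s ^ (p - 1 - 1 - 1) * ((a - 1) * p * s - κ * (p - 2))) := by
          rw [hsucc]; ring
      _ ≤ 0 := neg_nonpos.2 (mul_nonneg (mul_nonneg (by linarith) hX.le) (by linarith))

lemma tail_le (hp : 1 < p) (ha : 1 ≤ a) (hu : 0 ≤ u) (hκ : κ * u * (p - 2) ≤ (a - 1) * p * u)
    (ht : u ≤ t) :
    (1 - a) * t ^ p + κ * u * t ^ (p - 1) ≤ ((1 - a) * u + κ * t) * u ^ (p - 1) := by
  rcases hu.eq_or_lt with rfl | hu0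
  · rw [Real.zero_rpow (by linarith)]
    have : 0 ≤ t ^ p := Real.rpow_nonneg ht _
    nlinarith
  · have htangent := le_tangent_of_concaveOn (concaveOn_tail hp ha hu hκ)
      (((Real.hasDerivAt_rpow_const (Or.inl hu0.ne')).const_mul _).add
        ((Real.hasDerivAt_rpow_const (Or.inl hu0.ne')).const_mul _)) self_mem_Ici ht ht
    refine htangent.trans ?_
    have hpred : u ^ (p - 1) = u * u ^ (p - 1 - 1) := by
      rw [Real.rpow_sub_one hu0.ne' (p - 1)]
      field_simp
    have hX : 0 < u ^ (p - 1 - 1) := Real.rpow_pos_of_pos hu0 _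
    rw [rpow_eq_mul_rpow_sub_one hp hu, hpred]
    nlinarith [mul_nonneg (mul_nonneg hX.le (sub_nonneg.2 ht)) (sub_nonneg.2 hκ)]

lemma two_mul_apply_of_le (hp : 1 < p) (hu : 0 ≤ u) (ht : u ≤ t) :
    2 * burkholder p a ((t + u) / 2) ((t - u) / 2) =
      (1 - a) * t ^ p + -(1 + a) * u * t ^ (p - 1) := by
  rw [burkholder, abs_of_nonneg (by linarith), abs_of_nonneg (by linarith),
    rpow_eq_mul_rpow_sub_one hp (hu.trans ht), show (t + u) / 2 + (t - u) / 2 = t by ring]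
  ring

lemma two_mul_apply_of_le_neg (hp : 1 < p) (hu : 0 ≤ u) (ht : t ≤ -u) :
    2 * burkholder p a ((t + u) / 2) ((t - u) / 2) =
      (1 - a) * (-t) ^ p + (1 + a) * u * (-t) ^ (p - 1) := by
  rw [burkholder, abs_of_nonpos (by linarith), abs_of_nonpos (by linarith),
    rpow_eq_mul_rpow_sub_one hp (by linarith : 0 ≤ -t),
    show -((t + u) / 2) + -((t - u) / 2) = -t by ring]
  ring

lemma two_mul_apply_of_mem_Icc (ht : t ∈ Icc (-u) u) :
    2 * burkholder p a ((t + u) / 2) ((t - u) / 2) =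
      -(1 + a) * u ^ (p - 1) * t + (1 - a) * u * u ^ (p - 1) := by
  rw [burkholder, abs_of_nonpos (by linarith [ht.2]), abs_of_nonneg (by linarith [ht.1]),
    show (t + u) / 2 + -((t - u) / 2) = u by ring]
  ring

/- Along a diagonal, twice Burkholder's function is affine where the coordinates have opposite
signs, and continues on both sides by the concave tails, which stay below that affine function. -/
lemma concaveOn_two_mul (hp : 1 < p) (hpa : |(1 + a) * (p - 2)| ≤ (a - 1) * p) (hu : 0 ≤ u) :
    ConcaveOn ℝ univ fun t => 2 * burkholder p a ((t + u) / 2) ((t - u) / 2) := by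
  have ha : 1 ≤ a := by nlinarith [abs_nonneg ((1 + a) * (p - 2))]
  have hright : -(1 + a) * u * (p - 2) ≤ (a - 1) * p * u := by
    nlinarith [neg_abs_le ((1 + a) * (p - 2))]
  have hleft : (1 + a) * u * (p - 2) ≤ (a - 1) * p * u := by
    nlinarith [le_abs_self ((1 + a) * (p - 2))]
  refine concaveOn_univ_of_le_affine (b := -u) (c := u) (fun t => ?_)
    (fun t => two_mul_apply_of_mem_Icc) (by linarith) ?_ ?_
  · rcases le_total u t with h | h
    · rw [two_mul_apply_of_le hp hu h]
      linarith [tail_le hp ha hu hright h]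
    · rcases le_total (-u) t with h' | h'
      · exact (two_mul_apply_of_mem_Icc ⟨h', h⟩).le
      · rw [two_mul_apply_of_le_neg hp hu h']
        linarith [tail_le hp ha hu hleft (le_neg_of_le_neg h')]
  · have htail := (concaveOn_tail hp ha hu hleft).comp_linearMap (-LinearMap.id)
    have hIic : (-LinearMap.id : ℝ →ₗ[ℝ] ℝ) ⁻¹' Ici u = Iic (-u) := by
      ext t; simp [le_neg]
    rw [hIic] at htail
    exact htail.congr fun t ht => (two_mul_apply_of_le_neg hp hu ht).symm
  · exact (concaveOn_tail hp ha hu hright).congr fun t ht => (two_mul_apply_of_le hp hu ht).symm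

end Line

lemma exists_supergradient_diagonal (hp : 1 < p) (hpa : |(1 + a) * (p - 2)| ≤ (a - 1) * p)
    (x y : ℝ) :
    ∃ k, ∀ t, burkholder p a (x + t) (y + t) ≤ burkholder p a x y + k * t := by
  wlog hyx : y ≤ x generalizing x y with H
  · obtain ⟨k, hk⟩ := H (-x) (-y) (by linarith)
    refine ⟨-k, fun t => ?_⟩
    have := hk (-t)
    simp only [← neg_add, neg_left, neg_right] at this
    linarith
  obtain ⟨k, hk⟩ := exists_supergradient_of_concaveOn
    (concaveOn_two_mul hp hpa (sub_nonneg.2 hyx)) (x + y)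
  refine ⟨k, fun t => ?_⟩
  have := hk (x + y + 2 * t)
  rw [show (x + y + 2 * t + (x - y)) / 2 = x + t by ring,
    show (x + y + 2 * t - (x - y)) / 2 = y + t by ring,
    show (x + y + (x - y)) / 2 = x by ring, show (x + y - (x - y)) / 2 = y by ring] at this
  linarith

lemma exists_supergradient (hp : 1 < p) (hpa : |(1 + a) * (p - 2)| ≤ (a - 1) * p) (x y : ℝ)
    {ε : ℝ} (hε : |ε| = 1) :
    ∃ k, ∀ t, burkholder p a (x + t) (y + ε * t) ≤ burkholder p a x y + k * t := by
  rcases eq_or_eq_neg_of_abs_eq hε with rfl | rfl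
  · simpa only [one_mul] using exists_supergradient_diagonal hp hpa x y
  · obtain ⟨k, hk⟩ := exists_supergradient_diagonal hp hpa x (-y)
    refine ⟨k, fun t => ?_⟩
    have := hk t
    rwa [neg_right, show -y + t = -(y + -1 * t) by ring, neg_right] at this

end burkholder

/-- `U` is a Burkholder function for the exponent `p` with constant `C`: a continuous
majorant of `(|y| ^ p - C |x| ^ p) / 2` that has affine majorants along the lines of slope `±1` and
is nonpositive on the two diagonals. Hence `∫ U (f, g)` does not increase when the martingale `f`
and its transform `g` by a choice of signs make one more step. -/
structure IsBurkholderFunction (p C : ℝ) (U : ℝ → ℝ → ℝ) : Prop where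
  continuous_uncurry : Continuous (Function.uncurry U)
  rpow_le : ∀ x y, |y| ^ p ≤ C * |x| ^ p + 2 * U x y
  apply_mul_le_zero : ∀ x ε, |ε| = 1 → U x (ε * x) ≤ 0
  exists_supergradient : ∀ x y ε, |ε| = 1 → ∃ k, ∀ t, U (x + t) (y + ε * t) ≤ U x y + k * t

theorem exists_isBurkholderFunction {p : ℝ} (hp : 1 < p) :
    ∃ C U, IsBurkholderFunction p C U := by
  let a := max 1 (max (p - 1) (p - 1)⁻¹)
  have ha : 1 ≤ a := le_max_left _ _
  have ha1 : p - 1 ≤ a := (le_max_left _ _).trans (le_max_right _ _)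
  have ha2 : 1 ≤ a * (p - 1) := by
    rw [← inv_le_iff_one_le_mul₀ (by linarith)]
    exact (le_max_right _ _).trans (le_max_right _ _)
  have hpa : |(1 + a) * (p - 2)| ≤ (a - 1) * p := abs_le.2 ⟨by linarith, by linarith⟩
  exact ⟨_, burkholder p a, burkholder.continuous_uncurry hp,
    burkholder.rpow_le hp (by linarith), fun x ε => burkholder.apply_mul_le_zero ha x,
    fun x y ε => burkholder.exists_supergradient hp hpa x y⟩

/-! ### Unconditional frames -/

/-- `(g i, gs i)` is an unconditional Schauder frame: every vector `f` is the unconditional sum of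
the series `∑ i, gs i f • g i`. -/
def IsUnconditionalFrame {ι 𝕜 E : Type*} [NontriviallyNormedField 𝕜] [NormedAddCommGroup E]
    [NormedSpace 𝕜 E] (g : ι → E) (gs : ι → E →L[𝕜] 𝕜) : Prop :=
  ∀ f, HasSum (fun i => gs i f • g i) f

namespace IsUnconditionalFrame

section Dense

variable {ι 𝕜 E : Type*} [NontriviallyNormedField 𝕜] [NormedAddCommGroup E] [NormedSpace 𝕜 E]
  {g : ι → E} {gs : ι → E →L[𝕜] 𝕜}

lemma comp_equiv {ι' : Type*} (h : IsUnconditionalFrame g gs) (e : ι' ≃ ι) :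
    IsUnconditionalFrame (g ∘ e) (gs ∘ e) :=
  fun f => e.hasSum_iff.2 (h f)

lemma of_dense {s : Set E} (hs : Dense s) (K : ℝ)
    (hK : ∀ (F : Finset ι) (f : E), ‖∑ i ∈ F, gs i f • g i‖ ≤ K * ‖f‖)
    (h : ∀ f ∈ s, HasSum (fun i => gs i f • g i) f) : IsUnconditionalFrame g gs := by
  let S (F : Finset ι) : E →L[𝕜] E := ∑ i ∈ F, (gs i).smulRight (g i)
  have hS (F : Finset ι) (f : E) : S F f = ∑ i ∈ F, gs i f • g i := by
    simp only [S, sum_apply, ContinuousLinearMap.smulRight_apply]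
  have hequi : Equicontinuous fun (F : Finset ι) (f : E) => S F f :=
    (LipschitzWith.uniformEquicontinuous _ K.toNNReal fun F =>
      AddMonoidHomClass.lipschitz_of_bound (S F) K fun f => hS F f ▸ hK F f).equicontinuous
  have hclosed := hequi.isClosed_setOfPred_tendsto (l := atTop) continuous_id
  intro f
  have hf := hclosed.closure_subset_iff.2 (fun f hf => by simpa only [hS] using! h f hf) (hs f)
  simpa only [hS] using! hf

lemma of_biorthogonal (horth : ∀ i j, i ≠ j → gs i (g j) = 0) (hself : ∀ i, gs i (g i) • g i = g i)
    (hdense : Dense (Submodule.span 𝕜 (range g) : Set E)) (K : ℝ)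
    (hK : ∀ (s F : Finset ι) (a : ι → 𝕜), F ⊆ s → ‖∑ i ∈ F, a i • g i‖ ≤ K * ‖∑ i ∈ s, a i • g i‖) :
    IsUnconditionalFrame g gs := by
  classical
  have hspan : ∀ f ∈ Submodule.span 𝕜 (range g), ∃ (s : Finset ι) (a : ι → 𝕜),
      f = ∑ i ∈ s, a i • g i ∧ (∀ i ∈ s, gs i f • g i = a i • g i) ∧ ∀ i ∉ s, gs i f = 0 := by
    intro f hf
    obtain ⟨a, rfl⟩ := Finsupp.mem_span_range_iff_exists_finsupp.1 hf
    refine ⟨a.support, a, rfl, fun i hi => ?_, fun i hi => ?_⟩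
    · rw [Finsupp.sum, map_sum, Finset.sum_eq_single_of_mem i hi, map_smul, smul_assoc, hself]
      intro j _ hji
      rw [map_smul, horth i j hji.symm, smul_zero]
    · rw [Finsupp.sum, map_sum]
      refine Finset.sum_eq_zero fun j hj => ?_
      rw [map_smul, horth i j (ne_of_mem_of_not_mem hj hi).symm, smul_zero]
  refine of_dense hdense K (fun F f => ?_) fun f hf => ?_
  · have hclosed : IsClosed {f : E | ‖∑ i ∈ F, gs i f • g i‖ ≤ K * ‖f‖} :=
      isClosed_le (by fun_prop) (by fun_prop)
    refine hclosed.closure_subset_iff.2 (fun f hf => ?_) (hdense f)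
    obtain ⟨s, a, hfa, hs, hs'⟩ := hspan f hf
    calc ‖∑ i ∈ F, gs i f • g i‖ = ‖∑ i ∈ F ∩ s, gs i f • g i‖ := by
          rw [Finset.sum_subset Finset.inter_subset_left fun i hi his => ?_]
          rw [hs' i fun h => his (Finset.mem_inter.2 ⟨hi, h⟩), zero_smul]
      _ = ‖∑ i ∈ F ∩ s, a i • g i‖ := by
          rw [Finset.sum_congr rfl fun i hi => hs i (Finset.mem_of_mem_inter_right hi)]
      _ ≤ K * ‖f‖ := by
          rw [hfa]
          exact hK s _ a Finset.inter_subset_right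
  · obtain ⟨s, a, hfa, hs, hs'⟩ := hspan f hf
    have : HasSum (fun i => gs i f • g i) (∑ i ∈ s, gs i f • g i) :=
      hasSum_sum_of_ne_finset_zero fun i hi => by rw [hs' i hi, zero_smul]
    rwa [Finset.sum_congr rfl hs, ← hfa] at this

end Dense

end IsUnconditionalFrame

/-! ### Splitting the terms of a series into blocks -/

lemma add_sum_smul_mem_of_convex {ι E : Type*} [AddCommGroup E] [Module ℝ E] {C : Set E}
    (hC : Convex ℝ C) {x : ι → E} {θ : ι → ℝ} (hθ : ∀ i, θ i ∈ Icc (0 : ℝ) 1) (s : Finset ι) :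
    ∀ y, (∀ t ⊆ s, y + ∑ i ∈ t, x i ∈ C) → y + ∑ i ∈ s, θ i • x i ∈ C := by
  classical
  induction s using Finset.induction_on with
  | empty => exact fun y h => h ∅ subset_rfl
  | insert a s ha ih =>
    intro y h
    rw [Finset.sum_insert ha, ← add_assoc]
    refine ih _ fun t ht => ?_
    have hat : a ∉ t := fun hat => ha (ht hat)
    have h0 := h t (ht.trans (Finset.subset_insert a s))
    have h1 := h (insert a t) (Finset.insert_subset_insert a ht)
    rw [Finset.sum_insert hat] at h1
    convert hC h0 h1 (sub_nonneg.2 (hθ a).2) (hθ a).1 (sub_add_cancel 1 (θ a)) using 1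
    module

lemma hasSum_sigma_of_norm_sum_sub_smul_le {ι E : Type*} {κ : ι → Type*} [∀ i, Fintype (κ i)]
    [NormedAddCommGroup E] [NormedSpace ℝ E] {z : (Σ i, κ i) → E} {f : E}
    (hf : HasSum (fun i => ∑ k, z ⟨i, k⟩) f) {a : ι → ℝ} (ha : Summable a)
    (hza : ∀ i (F : Finset (κ i)), ∃ θ ∈ Icc (0 : ℝ) 1,
      ‖∑ k ∈ F, z ⟨i, k⟩ - θ • ∑ k, z ⟨i, k⟩‖ ≤ a i) :
    HasSum z f := by
  classical
  set x := fun i => ∑ k, z ⟨i, k⟩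
  rw [HasSum, SummationFilter.unconditional_filter, Metric.tendsto_atTop] at hf ⊢
  intro ε hε
  obtain ⟨s₁, hs₁⟩ := hf (ε / 2) (half_pos hε)
  obtain ⟨s₂, hs₂⟩ := summable_iff_vanishing_norm.1 ha (ε / 2) (half_pos hε)
  refine ⟨(s₁ ∪ s₂).sigma fun _ => Finset.univ, fun T hT => ?_⟩
  set s := s₁ ∪ s₂
  set t := s ∪ T.image Sigma.fst
  set F : ∀ i, Finset (κ i) := fun i => T.preimage (Sigma.mk i) sigma_mk_injective.injOn
  have hTt : ∑ j ∈ T, z j = ∑ i ∈ t, ∑ k ∈ F i, z ⟨i, k⟩ := by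
    rw [← Finset.sum_sigma, Finset.sigma_preimage_mk_of_subset T Finset.subset_union_right]
  have hFs : ∀ i ∈ s, ∑ k ∈ F i, z ⟨i, k⟩ = x i := fun i hi => by
    have hFi : F i = Finset.univ := Finset.eq_univ_iff_forall.2 fun k =>
      Finset.mem_preimage.2 (hT (Finset.mem_sigma.2 ⟨hi, Finset.mem_univ k⟩))
    rw [hFi]
  choose θ hθ hθa using fun i => hza i (F i)
  have hmain : ∑ i ∈ s, x i + ∑ i ∈ t \ s, θ i • x i ∈ Metric.ball f (ε / 2) := by
    refine add_sum_smul_mem_of_convex (convex_ball f _) hθ _ _ fun t' ht' => ?_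
    rw [← Finset.sum_union (Finset.disjoint_of_subset_right ht' Finset.disjoint_sdiff)]
    exact hs₁ _ (Finset.subset_union_left.trans Finset.subset_union_left)
  have herr : ‖∑ i ∈ t \ s, (∑ k ∈ F i, z ⟨i, k⟩ - θ i • x i)‖ < ε / 2 := calc
    _ ≤ ∑ i ∈ t \ s, a i := norm_sum_le_of_le _ fun i _ => hθa i
    _ ≤ ‖∑ i ∈ t \ s, a i‖ := Real.le_norm_self _
    _ < ε / 2 := hs₂ _ (Finset.disjoint_of_subset_right Finset.subset_union_right
        Finset.sdiff_disjoint)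
  rw [Metric.mem_ball, dist_eq_norm] at hmain
  calc dist (∑ j ∈ T, z j) f
      = ‖(∑ i ∈ s, x i + ∑ i ∈ t \ s, θ i • x i - f) +
          ∑ i ∈ t \ s, (∑ k ∈ F i, z ⟨i, k⟩ - θ i • x i)‖ := by
        rw [hTt, dist_eq_norm, ← Finset.sum_sdiff Finset.subset_union_left,
          Finset.sum_congr rfl hFs, Finset.sum_sub_distrib]
        congr 1
        abel
    _ < ε := (norm_add_le _ _).trans_lt (by linarith)

/- A partial sum of a block is close to a multiple in `[0, 1]` of the corresponding term of the
original series, and such multiples do not affect unconditional convergence. -/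
theorem IsUnconditionalFrame.sigma {ι 𝕜 E : Type*} {κ : ι → Type*} [∀ i, Fintype (κ i)]
    [∀ i, Nonempty (κ i)] [RCLike 𝕜] [NormedAddCommGroup E] [NormedSpace 𝕜 E] {h : ι → E}
    {hs : ι → E →L[𝕜] 𝕜} (hh : IsUnconditionalFrame h hs) {g : ∀ i, κ i → E}
    (hg : ∀ i, ∑ k, g i k = Fintype.card (κ i) • h i) {δ : ι → ℝ}
    (hδ : ∀ i (F : Finset (κ i)), ‖∑ k ∈ F, (g i k - h i)‖ ≤ Fintype.card (κ i) * δ i)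
    (hsum : Summable fun i => ‖hs i‖ * δ i) :
    IsUnconditionalFrame (fun j : Σ i, κ i => g j.1 j.2)
      fun j => (Fintype.card (κ j.1) : 𝕜)⁻¹ • hs j.1 := by
  let : NormedSpace ℝ E := NormedSpace.restrictScalars ℝ 𝕜 E
  intro f
  have hcard (i) : (Fintype.card (κ i) : 𝕜) ≠ 0 := Nat.cast_ne_zero.2 Fintype.card_ne_zero
  have hblock (i) (F : Finset (κ i)) : ∑ k ∈ F, ((Fintype.card (κ i) : 𝕜)⁻¹ • hs i) f • g i k =
      ((Fintype.card (κ i) : 𝕜)⁻¹ * hs i f) • ∑ k ∈ F, g i k := by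
    rw [Finset.smul_sum]; rfl
  have hfull (i) : ∑ k, ((Fintype.card (κ i) : 𝕜)⁻¹ • hs i) f • g i k = hs i f • h i := by
    rw [hblock, hg, ← Nat.cast_smul_eq_nsmul 𝕜, smul_smul, mul_right_comm,
      inv_mul_cancel₀ (hcard i), one_mul]
  refine hasSum_sigma_of_norm_sum_sub_smul_le (a := fun i => ‖f‖ * (‖hs i‖ * δ i)) ?_
    (hsum.mul_left _) fun i F => ⟨F.card / Fintype.card (κ i), ⟨by positivity, ?_⟩, ?_⟩
  · simpa only [hfull] using hh f
  · exact div_le_one_of_le₀ (mod_cast F.card_le_univ) (Nat.cast_nonneg _)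
  · have hθ : (F.card / Fintype.card (κ i) : ℝ) • hs i f • h i =
        ((Fintype.card (κ i) : 𝕜)⁻¹ * hs i f) • ∑ _k ∈ F, h i := by
      change algebraMap ℝ 𝕜 (F.card / Fintype.card (κ i)) • hs i f • h i = _
      rw [Finset.sum_const, ← Nat.cast_smul_eq_nsmul 𝕜, smul_smul, smul_smul, map_div₀, map_natCast,
        map_natCast]
      ring_nf
    rw [hfull, hblock, hθ, ← smul_sub, ← Finset.sum_sub_distrib, norm_smul, norm_mul, norm_inv,
      RCLike.norm_natCast, mul_assoc, inv_mul_le_iff₀ (mod_cast Fintype.card_pos)]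
    calc ‖hs i f‖ * ‖∑ k ∈ F, (g i k - h i)‖
        ≤ ‖hs i‖ * ‖f‖ * (Fintype.card (κ i) * δ i) :=
          mul_le_mul ((hs i).le_opNorm f) (hδ i F) (norm_nonneg _) (by positivity)
      _ = Fintype.card (κ i) * (‖f‖ * (‖hs i‖ * δ i)) := by ring

/-! ### Preliminaries on `L^p` -/

section Lp

variable {X : Type*} [MeasurableSpace X] {μ : Measure X} {p : ℝ≥0∞}

lemma lp_coeFn_sum {ι E : Type*} [NormedAddCommGroup E] (s : Finset ι) (f : ι → Lp E p μ) :
    ⇑(∑ i ∈ s, f i) =ᵐ[μ] fun x => ∑ i ∈ s, f i x := by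
  classical
  induction s using Finset.induction_on with
  | empty => exact Lp.coeFn_zero E p μ
  | insert a s ha ih =>
    rw [Finset.sum_insert ha]
    filter_upwards [Lp.coeFn_add (f a) (∑ i ∈ s, f i), ih] with x hadd hs
    rw [hadd, Pi.add_apply, hs, Finset.sum_insert ha]

lemma lp_norm_rpow_toReal {E : Type*} [NormedAddCommGroup E] (hp₀ : p ≠ 0) (hp : p ≠ ⊤)
    (f : Lp E p μ) : ‖f‖ ^ p.toReal = ∫ x, ‖f x‖ ^ p.toReal ∂μ := by
  have hnn : 0 ≤ ∫ x, ‖f x‖ ^ p.toReal ∂μ := integral_nonneg fun x => by positivity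
  rw [Lp.norm_def, (Lp.memLp f).eLpNorm_eq_integral_rpow_norm hp₀ hp,
    ENNReal.toReal_ofReal (by positivity), ← Real.rpow_mul hnn,
    inv_mul_cancel₀ (toReal_ne_zero.2 ⟨hp₀, hp⟩), Real.rpow_one]

lemma exists_clm_eq_integral_mul [IsFiniteMeasure μ] [hp : Fact (1 ≤ p)] {h : X → ℂ}
    (hh : MemLp h ⊤ μ) : ∃ L : Lp ℂ p μ →L[ℂ] ℂ, ∀ f, L f = ∫ x, f x * h x ∂μ := by
  have := HolderConjugate.conjExponent hp.out
  have : Fact (1 ≤ p.conjExponent) := ⟨HolderConjugate.one_le p.conjExponent p⟩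
  have hhq : MemLp h p.conjExponent μ := hh.mono_exponent le_top
  refine ⟨((ContinuousLinearMap.mul ℂ ℂ).lpPairing μ p p.conjExponent).flip hhq.toLp, fun f => ?_⟩
  rw [ContinuousLinearMap.flip_apply, ContinuousLinearMap.lpPairing_eq_integral]
  refine integral_congr_ae ?_
  filter_upwards [hhq.coeFn_toLp] with x hx
  rw [hx, ContinuousLinearMap.mul_apply']

lemma integrable_comp_uncurry_of_abs_le [IsFiniteMeasure μ] {U : ℝ → ℝ → ℝ}
    (hU : Continuous (Function.uncurry U)) {f g : X → ℝ} (hf : Measurable f) (hg : Measurable g)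
    {M : ℝ} (hfM : ∀ x, |f x| ≤ M) (hgM : ∀ x, |g x| ≤ M) :
    Integrable (fun x => U (f x) (g x)) μ := by
  obtain ⟨B, hB⟩ := (isCompact_Icc.prod isCompact_Icc).exists_bound_of_continuousOn
    (s := Icc (-M) M ×ˢ Icc (-M) M) hU.continuousOn
  exact .of_bound (hU.measurable.comp (hf.prodMk hg)).aestronglyMeasurable B <| ae_of_all _ fun x =>
    hB (f x, g x) ⟨abs_le.1 (hfM x), abs_le.1 (hgM x)⟩

end Lp

/-! ### Haar systems -/

/-- A Haar system: bounded functions `h i`, enumerated along `rank`, such that every function is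
constant on the supports of the functions that are not before it, and all but the first have mean
zero. -/
structure IsHaarSystem {X ι : Type*} [MeasurableSpace X] (μ : Measure X) (rank : ι → ℕ)
    (h : ι → X → ℝ) : Prop where
  measurable : ∀ i, Measurable (h i)
  abs_le_one : ∀ i x, |h i x| ≤ 1
  integral_eq_zero : ∀ i j, i ≠ j → rank i ≤ rank j → ∫ x, h j x ∂μ = 0
  apply_eq : ∀ i j, i ≠ j → rank i ≤ rank j → ∀ x y, h j x ≠ 0 → h j y ≠ 0 → h i x = h i y

namespace IsHaarSystem

variable {X ι : Type*} [MeasurableSpace X] {μ : Measure X} {rank : ι → ℕ} {h : ι → X → ℝ}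

lemma abs_sum_mul_le (hh : IsHaarSystem μ rank h) (s : Finset ι) {c : ι → ℝ} {M : ℝ}
    (hc : ∑ i ∈ s, |c i| ≤ M) (x : X) : |∑ i ∈ s, c i * h i x| ≤ M :=
  ((Finset.abs_sum_le_sum_abs _ _).trans (Finset.sum_le_sum fun i _ => by
    rw [abs_mul]
    exact mul_le_of_le_one_right (abs_nonneg _) (hh.abs_le_one i x))).trans hc

lemma measurable_sum_mul (hh : IsHaarSystem μ rank h) (s : Finset ι) (c : ι → ℝ) :
    Measurable fun x => ∑ i ∈ s, c i * h i x :=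
  Finset.measurable_fun_sum s fun i _ => (hh.measurable i).const_mul (c i)

lemma integral_mul_eq_zero (hh : IsHaarSystem μ rank h) {i j : ι} (hij : i ≠ j) :
    ∫ x, h j x * h i x ∂μ = 0 := by
  wlog hr : rank i ≤ rank j generalizing i j
  · simpa only [mul_comm] using this hij.symm (le_of_not_ge hr)
  obtain ⟨c, hc⟩ : ∃ c, ∀ x, h j x * h i x = h j x * c := by
    by_cases hx₀ : ∃ x₀, h j x₀ ≠ 0
    · obtain ⟨x₀, hx₀⟩ := hx₀
      refine ⟨h i x₀, fun x => ?_⟩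
      by_cases hx : h j x = 0
      · simp only [hx, zero_mul]
      · rw [hh.apply_eq i j hij hr x x₀ hx hx₀]
    · push Not at hx₀
      exact ⟨0, fun x => by simp only [hx₀, zero_mul]⟩
  rw [integral_congr_ae (ae_of_all _ hc), integral_mul_const, hh.integral_eq_zero i j hij hr,
    zero_mul]

variable [IsFiniteMeasure μ] {ε : ι → ℝ}

lemma integrable (hh : IsHaarSystem μ rank h) (i : ι) : Integrable (h i) μ :=
  .of_bound (hh.measurable i).aestronglyMeasurable 1 (ae_of_all _ (hh.abs_le_one i))

lemma integrable_comp_sum (hh : IsHaarSystem μ rank h) (hε : ∀ i, |ε i| = 1) {U : ℝ → ℝ → ℝ}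
    (hU : Continuous (Function.uncurry U)) (s : Finset ι) (c : ι → ℝ) :
    Integrable (fun x => U (∑ i ∈ s, c i * h i x) (∑ i ∈ s, ε i * c i * h i x)) μ :=
  integrable_comp_uncurry_of_abs_le hU (hh.measurable_sum_mul s c) (hh.measurable_sum_mul s _)
    (hh.abs_sum_mul_le s le_rfl)
    (hh.abs_sum_mul_le s (Finset.sum_congr rfl fun i _ => by rw [abs_mul, hε, one_mul]).le)

/- The earlier functions are constant on the support of `h a`, so one affine majorant of `U` along
the direction `(1, ε a)` controls the whole increment, and `h a` has mean zero. -/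
lemma integral_comp_sum_insert_le [DecidableEq ι] (hh : IsHaarSystem μ rank h)
    (hε : ∀ i, |ε i| = 1) {p C : ℝ} {U : ℝ → ℝ → ℝ} (hU : IsBurkholderFunction p C U)
    {s : Finset ι} (hs : s.Nonempty) {a : ι} (ha : a ∉ s) (hrank : ∀ i ∈ s, rank i ≤ rank a)
    (c : ι → ℝ) :
    ∫ x, U (∑ i ∈ insert a s, c i * h i x) (∑ i ∈ insert a s, ε i * c i * h i x) ∂μ ≤
      ∫ x, U (∑ i ∈ s, c i * h i x) (∑ i ∈ s, ε i * c i * h i x) ∂μ := by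
  have hne : ∀ i ∈ s, i ≠ a := fun i hi => ne_of_mem_of_not_mem hi ha
  obtain ⟨k, hk⟩ : ∃ k, ∀ x,
      U (∑ i ∈ insert a s, c i * h i x) (∑ i ∈ insert a s, ε i * c i * h i x) ≤
        U (∑ i ∈ s, c i * h i x) (∑ i ∈ s, ε i * c i * h i x) + k * h a x := by
    simp only [Finset.sum_insert ha]
    by_cases hx₀ : ∃ x₀, h a x₀ ≠ 0
    · obtain ⟨x₀, hx₀⟩ := hx₀
      obtain ⟨k, hk⟩ := hU.exists_supergradient (∑ i ∈ s, c i * h i x₀)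
        (∑ i ∈ s, ε i * c i * h i x₀) (ε a) (hε a)
      refine ⟨k * c a, fun x => ?_⟩
      by_cases hx : h a x = 0
      · simp only [hx, mul_zero, zero_add, add_zero, le_refl]
      have hconst (b : ι → ℝ) : ∑ i ∈ s, b i * h i x = ∑ i ∈ s, b i * h i x₀ :=
        Finset.sum_congr rfl fun i hi => by
          rw [hh.apply_eq i a (hne i hi) (hrank i hi) x x₀ hx hx₀]
      rw [hconst c, hconst fun i => ε i * c i, add_comm (c a * h a x),
        add_comm (ε a * c a * h a x), mul_assoc (ε a), mul_assoc k]
      exact hk _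
    · push Not at hx₀
      exact ⟨0, fun x => by simp only [hx₀, mul_zero, zero_add, add_zero, le_refl]⟩
  obtain ⟨i, hi⟩ := hs
  calc _ ≤ ∫ x, (U (∑ i ∈ s, c i * h i x) (∑ i ∈ s, ε i * c i * h i x) + k * h a x) ∂μ :=
        integral_mono (hh.integrable_comp_sum hε hU.continuous_uncurry _ c)
          ((hh.integrable_comp_sum hε hU.continuous_uncurry s c).add
            ((hh.integrable a).const_mul k)) hk
    _ = _ := by
        rw [integral_add (hh.integrable_comp_sum hε hU.continuous_uncurry s c)
          ((hh.integrable a).const_mul k), integral_const_mul,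
          hh.integral_eq_zero i a (hne i hi) (hrank i hi), mul_zero, add_zero]

lemma integral_comp_sum_nonpos (hh : IsHaarSystem μ rank h) (hε : ∀ i, |ε i| = 1) {p C : ℝ}
    {U : ℝ → ℝ → ℝ} (hU : IsBurkholderFunction p C U) (s : Finset ι) (c : ι → ℝ) :
    ∫ x, U (∑ i ∈ s, c i * h i x) (∑ i ∈ s, ε i * c i * h i x) ∂μ ≤ 0 := by
  classical
  induction s using Finset.induction_on_max_value rank with
  | empty =>
    refine integral_nonpos fun x => ?_
    simpa only [Finset.sum_empty, mul_zero] using! hU.apply_mul_le_zero 0 1 abs_one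
  | insert a s ha hrank ih =>
    rcases s.eq_empty_or_nonempty with rfl | hs
    · refine integral_nonpos fun x => ?_
      simpa only [insert_empty_eq, Finset.sum_singleton, mul_assoc] using!
        hU.apply_mul_le_zero (c a * h a x) (ε a) (hε a)
    · exact (hh.integral_comp_sum_insert_le hε hU hs ha hrank c).trans ih

end IsHaarSystem

namespace IsBurkholderFunction

variable {p C : ℝ} {U : ℝ → ℝ → ℝ}

lemma one_le (hU : IsBurkholderFunction p C U) : 1 ≤ C := by
  have h := hU.rpow_le 1 1
  have h' := hU.apply_mul_le_zero 1 1 abs_one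
  rw [abs_one, Real.one_rpow, mul_one] at h
  rw [mul_one] at h'
  linarith

lemma norm_rpow_le (hU : IsBurkholderFunction p C U) (hp : 0 ≤ p) (z w : ℂ) :
    ‖w‖ ^ p ≤ 2 ^ p * (2 * C * ‖z‖ ^ p + 2 * (U z.re w.re + U z.im w.im)) := by
  have hmax : max |w.re| |w.im| ^ p ≤ |w.re| ^ p + |w.im| ^ p := by
    rcases max_choice |w.re| |w.im| with h | h <;> rw [h]
    · exact le_add_of_nonneg_right (by positivity)
    · exact le_add_of_nonneg_left (by positivity)
  have hre : C * |z.re| ^ p ≤ C * ‖z‖ ^ p :=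
    mul_le_mul_of_nonneg_left (Real.rpow_le_rpow (abs_nonneg _) (Complex.abs_re_le_norm z) hp)
      (zero_le_one.trans hU.one_le)
  have him : C * |z.im| ^ p ≤ C * ‖z‖ ^ p :=
    mul_le_mul_of_nonneg_left (Real.rpow_le_rpow (abs_nonneg _) (Complex.abs_im_le_norm z) hp)
      (zero_le_one.trans hU.one_le)
  calc ‖w‖ ^ p ≤ (2 * max |w.re| |w.im|) ^ p := by
        refine Real.rpow_le_rpow (norm_nonneg w) ((Complex.norm_le_abs_re_add_abs_im w).trans ?_) hp
        rw [two_mul]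
        exact add_le_add (le_max_left _ _) (le_max_right _ _)
    _ = 2 ^ p * max |w.re| |w.im| ^ p := Real.mul_rpow zero_le_two (by positivity)
    _ ≤ _ := by
        gcongr
        linarith [hU.rpow_le z.re w.re, hU.rpow_le z.im w.im]

end IsBurkholderFunction

namespace IsHaarSystem

variable {X ι : Type*} [MeasurableSpace X] {μ : Measure X} [IsFiniteMeasure μ] {rank : ι → ℕ}
  {h : ι → X → ℝ} {p : ℝ≥0∞}

lemma memLp (hh : IsHaarSystem μ rank h) (p : ℝ≥0∞) (i : ι) :
    MemLp (fun x => (h i x : ℂ)) p μ :=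
  .of_bound (Complex.measurable_ofReal.comp (hh.measurable i)).aestronglyMeasurable 1 <|
    ae_of_all _ fun x => (Complex.norm_real _).trans_le (hh.abs_le_one i x)

/-- The members of a Haar system as elements of the complex space `L^p`. -/
noncomputable def toLp (hh : IsHaarSystem μ rank h) (p : ℝ≥0∞) (i : ι) : Lp ℂ p μ :=
  (hh.memLp p i).toLp

lemma coeFn_toLp (hh : IsHaarSystem μ rank h) (p : ℝ≥0∞) (i : ι) :
    hh.toLp p i =ᵐ[μ] fun x => (h i x : ℂ) :=
  (hh.memLp p i).coeFn_toLp

lemma coeFn_sum_smul_toLp (hh : IsHaarSystem μ rank h) (s : Finset ι) (a : ι → ℂ) :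
    ⇑(∑ i ∈ s, a i • hh.toLp p i) =ᵐ[μ] fun x => ∑ i ∈ s, a i * h i x := by
  have hsmul : ∀ i, ⇑(a i • hh.toLp p i) =ᵐ[μ] fun x => a i * h i x := fun i => by
    filter_upwards [Lp.coeFn_smul (a i) (hh.toLp p i), hh.coeFn_toLp p i] with x hx hx'
    rw [hx, Pi.smul_apply, hx', smul_eq_mul]
  filter_upwards [lp_coeFn_sum s fun i => a i • hh.toLp p i,
    (eventually_all_finset s).2 fun i _ => hsmul i] with x hx hx'
  rw [hx, Finset.sum_congr rfl hx']

lemma integrable_norm_sum_rpow (hh : IsHaarSystem μ rank h) {p : ℝ} (hp : 0 ≤ p) (s : Finset ι)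
    (a : ι → ℂ) : Integrable (fun x => ‖∑ i ∈ s, a i * h i x‖ ^ p) μ := by
  have hmeas : Measurable fun x => ∑ i ∈ s, a i * (h i x : ℂ) :=
    Finset.measurable_fun_sum s fun i _ =>
      (Complex.measurable_ofReal.comp (hh.measurable i)).const_mul (a i)
  refine .of_bound (hmeas.norm.pow_const p).aestronglyMeasurable ((∑ i ∈ s, ‖a i‖) ^ p) <|
    ae_of_all _ fun x => ?_
  rw [Real.norm_of_nonneg (by positivity)]
  refine Real.rpow_le_rpow (norm_nonneg _) (norm_sum_le_of_le s fun i _ => ?_) hp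
  rw [norm_mul, Complex.norm_real]
  exact mul_le_of_le_one_right (norm_nonneg _) (hh.abs_le_one i x)

lemma integral_norm_sum_rpow_le (hh : IsHaarSystem μ rank h) {ε : ι → ℝ} (hε : ∀ i, |ε i| = 1)
    {p C : ℝ} {U : ℝ → ℝ → ℝ} (hU : IsBurkholderFunction p C U) (hp : 0 ≤ p) (s : Finset ι)
    (a : ι → ℂ) :
    ∫ x, ‖∑ i ∈ s, ε i * a i * h i x‖ ^ p ∂μ ≤
      2 ^ p * (2 * C * ∫ x, ‖∑ i ∈ s, a i * h i x‖ ^ p ∂μ) := by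
  let u (b : ι → ℝ) (x : X) := U (∑ i ∈ s, b i * h i x) (∑ i ∈ s, ε i * b i * h i x)
  have hint (b : ι → ℝ) : Integrable (u b) μ :=
    hh.integrable_comp_sum hε hU.continuous_uncurry s b
  have hnonpos (b : ι → ℝ) : ∫ x, u b x ∂μ ≤ 0 := hh.integral_comp_sum_nonpos hε hU s b
  let v (x : X) := u (fun i => (a i).re) x + u (fun i => (a i).im) x
  have hv : Integrable v μ := (hint _).add (hint _)
  have hpoint (x : X) : ‖∑ i ∈ s, ε i * a i * h i x‖ ^ p ≤
      2 ^ p * (2 * C * ‖∑ i ∈ s, a i * h i x‖ ^ p + 2 * v x) := by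
    convert hU.norm_rpow_le hp (∑ i ∈ s, a i * h i x) (∑ i ∈ s, ε i * a i * h i x) using 5 <;>
      simp only [u, Complex.re_sum, Complex.im_sum, Complex.re_mul_ofReal, Complex.im_mul_ofReal,
        Complex.re_ofReal_mul, Complex.im_ofReal_mul]
  have hnorm := (hh.integrable_norm_sum_rpow hp s a).const_mul (2 * C)
  calc _ ≤ ∫ x, 2 ^ p * (2 * C * ‖∑ i ∈ s, a i * h i x‖ ^ p + 2 * v x) ∂μ :=
        integral_mono (hh.integrable_norm_sum_rpow hp s fun i => ε i * a i)
          ((hnorm.add (hv.const_mul 2)).const_mul _) hpoint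
    _ = 2 ^ p * (2 * C * ∫ x, ‖∑ i ∈ s, a i * h i x‖ ^ p ∂μ + 2 * ∫ x, v x ∂μ) := by
        rw [integral_const_mul, integral_add hnorm (hv.const_mul 2), integral_const_mul,
          integral_const_mul]
    _ ≤ _ := by
        have hv_nonpos : ∫ x, v x ∂μ ≤ 0 := by
          rw [integral_add (hint _) (hint _)]
          exact add_nonpos (hnonpos _) (hnonpos _)
        gcongr
        linarith

variable [Fact (1 ≤ p)]

theorem exists_norm_sum_sign_smul_le (hh : IsHaarSystem μ rank h) (hp : 1 < p) (hp' : p ≠ ⊤) :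
    ∃ K : ℝ, ∀ (s : Finset ι) (ε : ι → ℝ) (a : ι → ℂ), (∀ i, |ε i| = 1) →
      ‖∑ i ∈ s, (ε i * a i : ℂ) • hh.toLp p i‖ ≤ K * ‖∑ i ∈ s, a i • hh.toLp p i‖ := by
  have hp₀ : p ≠ 0 := (zero_lt_one.trans hp).ne'
  have hpr : 0 < p.toReal := toReal_pos hp₀ hp'
  obtain ⟨C, U, hU⟩ := exists_isBurkholderFunction
    (show 1 < p.toReal from (toReal_lt_toReal one_ne_top hp').2 hp)
  have hC := hU.one_le
  have hnorm (s : Finset ι) (b : ι → ℂ) : ‖∑ i ∈ s, b i • hh.toLp p i‖ ^ p.toReal =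
      ∫ x, ‖∑ i ∈ s, b i * h i x‖ ^ p.toReal ∂μ := by
    rw [lp_norm_rpow_toReal hp₀ hp']
    refine integral_congr_ae ?_
    filter_upwards [hh.coeFn_sum_smul_toLp (p := p) s b] with x hx
    rw [hx]
  refine ⟨(2 ^ p.toReal * (2 * C)) ^ p.toReal⁻¹, fun s ε a hε => ?_⟩
  rw [← Real.rpow_le_rpow_iff (norm_nonneg _) (by positivity) hpr,
    Real.mul_rpow (by positivity) (norm_nonneg _), Real.rpow_inv_rpow (by positivity) hpr.ne',
    hnorm, hnorm, mul_assoc]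
  exact hh.integral_norm_sum_rpow_le hε hU hpr.le s a

lemma exists_norm_sum_smul_le (hh : IsHaarSystem μ rank h) (hp : 1 < p) (hp' : p ≠ ⊤) :
    ∃ K : ℝ, ∀ (s F : Finset ι) (a : ι → ℂ), F ⊆ s →
      ‖∑ i ∈ F, a i • hh.toLp p i‖ ≤ K * ‖∑ i ∈ s, a i • hh.toLp p i‖ := by
  classical
  obtain ⟨K, hK⟩ := hh.exists_norm_sum_sign_smul_le hp hp'
  refine ⟨(1 + K) / 2, fun s F a hF => ?_⟩
  let ε (i : ι) : ℝ := if i ∈ F then 1 else -1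
  have hε (i : ι) : |ε i| = 1 := by
    by_cases hi : i ∈ F <;> simp [ε, hi]
  have hsplit : (2 : ℂ) • ∑ i ∈ F, a i • hh.toLp p i =
      ∑ i ∈ s, a i • hh.toLp p i + ∑ i ∈ s, (ε i * a i : ℂ) • hh.toLp p i := by
    rw [← Finset.sum_add_distrib, Finset.smul_sum]
    refine Finset.sum_subset_zero_on_sdiff hF (fun i hi => ?_) fun i hi => ?_
    · simp only [ε, if_neg (Finset.mem_sdiff.1 hi).2, Complex.ofReal_neg, Complex.ofReal_one]
      module
    · simp only [ε, if_pos hi, Complex.ofReal_one]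
      module
  have htriangle : 2 * ‖∑ i ∈ F, a i • hh.toLp p i‖ ≤
      ‖∑ i ∈ s, a i • hh.toLp p i‖ + ‖∑ i ∈ s, (ε i * a i : ℂ) • hh.toLp p i‖ := by
    simpa only [← hsplit, norm_smul, Complex.norm_ofNat] using norm_add_le
      (∑ i ∈ s, a i • hh.toLp p i) (∑ i ∈ s, (ε i * a i : ℂ) • hh.toLp p i)
  linarith [hK s ε a hε]

theorem exists_isUnconditionalFrame (hh : IsHaarSystem μ rank h) (hp : 1 < p) (hp' : p ≠ ⊤)
    (hdense : Dense (Submodule.span ℂ (range (hh.toLp p)) : Set (Lp ℂ p μ))) :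
    ∃ hs : ι → Lp ℂ p μ →L[ℂ] ℂ, IsUnconditionalFrame (hh.toLp p) hs := by
  obtain ⟨K, hK⟩ := hh.exists_norm_sum_smul_le hp hp'
  choose L hL using fun i => exists_clm_eq_integral_mul (p := p) (hh.memLp ⊤ i)
  have hLh (i j : ι) : L i (hh.toLp p j) = ((∫ x, h j x * h i x ∂μ : ℝ) : ℂ) := by
    rw [hL, ← integral_complex_ofReal]
    refine integral_congr_ae ?_
    filter_upwards [hh.coeFn_toLp p j] with x hx
    rw [hx, Complex.ofReal_mul]
  refine ⟨fun i => ((∫ x, h i x * h i x ∂μ : ℝ) : ℂ)⁻¹ • L i, .of_biorthogonal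
    (fun i j hij => ?_) (fun i => ?_) hdense K hK⟩
  · rw [_root_.smul_apply, hLh, hh.integral_mul_eq_zero hij, Complex.ofReal_zero, smul_zero]
  · rw [_root_.smul_apply, hLh]
    by_cases h₀ : ∫ x, h i x * h i x ∂μ = 0
    · have hint : Integrable (fun x => h i x * h i x) μ :=
        (hh.integrable i).mul_bdd (hh.measurable i).aestronglyMeasurable
          (ae_of_all _ (hh.abs_le_one i))
      have hzero : hh.toLp p i = 0 := by
        rw [Lp.eq_zero_iff_ae_eq_zero]
        filter_upwards [hh.coeFn_toLp p i, (integral_eq_zero_iff_of_nonneg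
          (fun x => mul_self_nonneg (h i x)) hint).1 h₀] with x hx hx'
        rw [hx, mul_self_eq_zero.1 hx', Complex.ofReal_zero, Pi.zero_apply]
      rw [hzero, smul_zero]
    · rw [smul_eq_mul, inv_mul_cancel₀ (Complex.ofReal_ne_zero.2 h₀), one_smul]

end IsHaarSystem

section Indicators

variable {X : Type*} [MeasurableSpace X] {μ : Measure X} [IsFiniteMeasure μ] {p : ℝ≥0∞}
  [Fact (1 ≤ p)] {V : Submodule ℂ (Lp ℂ p μ)}

lemma indicatorConstLp_mem_of_isPiSystem (hp' : p ≠ ⊤) (hV : IsClosed (V : Set (Lp ℂ p μ)))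
    {S : Set (Set X)} (hgen : ‹MeasurableSpace X› = MeasurableSpace.generateFrom S)
    (hpi : IsPiSystem S)
    (huniv : indicatorConstLp p .univ (measure_ne_top μ univ) (1 : ℂ) ∈ V)
    (hS : ∀ s ∈ S, ∀ hs : MeasurableSet s,
      indicatorConstLp p hs (measure_ne_top μ s) (1 : ℂ) ∈ V)
    (s : Set X) (hs : MeasurableSet s) :
    indicatorConstLp p hs (measure_ne_top μ s) (1 : ℂ) ∈ V := by
  induction s, hs using MeasurableSpace.induction_on_inter hgen hpi with
  | empty => exact indicatorConstLp_empty (E := ℂ) (p := p) ▸ V.zero_mem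
  | basic s hs => exact hS s hs _
  | compl s hs ih =>
    have h := indicatorConstLp_disjoint_union (p := p) hs hs.compl (measure_ne_top μ s)
      (measure_ne_top μ sᶜ) disjoint_compl_right (1 : ℂ)
    simp only [union_compl_self] at h
    exact (V.add_mem_iff_right ih).1 (h ▸ huniv)
  | iUnion f hf hfm ih =>
    have hmeas (n : ℕ) : MeasurableSet (⋃ i < n, f i) :=
      .biUnion (to_countable _) fun i _ => hfm i
    have hfin (n : ℕ) : indicatorConstLp p (hmeas n) (measure_ne_top μ _) (1 : ℂ) ∈ V := by
      induction n with
      | zero => simp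
      | succ n ihn =>
        have hdisj : Disjoint (⋃ i < n, f i) (f n) :=
          disjoint_iUnion₂_left.2 fun i hi => hf hi.ne
        have h := V.add_mem ihn (ih n)
        rw [← indicatorConstLp_disjoint_union _ _ _ _ hdisj] at h
        simpa only [biUnion_lt_succ] using h
    refine hV.mem_of_tendsto (b := atTop) (tendsto_indicatorConstLp_set hp' ?_)
      (.of_forall hfin)
    refine tendsto_of_tendsto_of_tendsto_of_le_of_le tendsto_const_nhds
      (tendsto_measure_biUnion_Ici_zero_of_pairwise_disjoint (μ := μ)
        (fun i => (hfm i).nullMeasurableSet) hf) (fun _ => zero_le) fun n => measure_mono ?_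
    rintro x (⟨hx, hx'⟩ | ⟨hx, hx'⟩)
    · exact absurd (iUnion₂_subset_iUnion _ _ hx) hx'
    · obtain ⟨i, hi⟩ := mem_iUnion.1 hx
      exact mem_iUnion₂.2 ⟨i, le_of_not_gt fun hin => hx' (mem_iUnion₂.2 ⟨i, hin, hi⟩), hi⟩

lemma submodule_eq_top_of_indicatorConstLp_mem (hp' : p ≠ ⊤) (hV : IsClosed (V : Set (Lp ℂ p μ)))
    (hV_ind : ∀ (s : Set X) (hs : MeasurableSet s),
      indicatorConstLp p hs (measure_ne_top μ s) (1 : ℂ) ∈ V) :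
    V = ⊤ := by
  refine Submodule.eq_top_iff'.2 fun f => ?_
  induction f using Lp.induction hp' with
  | @indicatorConst c s hs hμs =>
    have hsmul : indicatorConstLp p hs hμs.ne c =
        c • indicatorConstLp p hs (measure_ne_top μ _) (1 : ℂ) := by
      refine (MemLp.toLp_congr _ _ (.of_eq ?_)).trans (MemLp.toLp_const_smul c _)
      funext x
      by_cases hx : x ∈ s <;> simp [hx]
    rw [Lp.simpleFunc.coe_indicatorConst, hsmul]
    exact V.smul_mem c (hV_ind _ hs)
  | add hf hg _ hfV hgV => exact V.add_mem hfV hgV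
  | isClosed => exact hV

end Indicators

/-! ### The Haar system of a countably generated space -/

section CountablyGenerated

variable {X : Type*} [MeasurableSpace X] [MeasurableSpace.CountablyGenerated X]

variable (X) in
/-- The cylinder of the points for which membership in the first `w.length` sets of a generating
sequence is recorded by the word `w`, the most recent bit coming first. -/
def genCylinder (w : List Bool) : Set X :=
  {x | PiNat.res (MeasurableSpace.mapNatBool X x) w.length = w}

lemma genCylinder_nil : genCylinder X [] = univ :=
  eq_univ_of_forall fun _ => rfl

lemma genCylinder_cons (b : Bool) (w : List Bool) :
    genCylinder X (b :: w) =
      genCylinder X w ∩ {x | MeasurableSpace.mapNatBool X x w.length = b} := by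
  ext x
  simp only [genCylinder, List.length_cons, PiNat.res_succ, List.cons.injEq, mem_ofPred_eq,
    mem_inter_iff, and_comm]

lemma measurableSet_genCylinder (w : List Bool) : MeasurableSet (genCylinder X w) := by
  induction w with
  | nil => rw [genCylinder_nil]; exact .univ
  | cons b w ih =>
    rw [genCylinder_cons]
    exact ih.inter ((measurable_pi_iff.1 (MeasurableSpace.measurable_mapNatBool X) w.length)
      (measurableSet_singleton b))

lemma eq_of_mem_genCylinder {v w : List Bool} {x : X} (hv : x ∈ genCylinder X v)
    (hw : x ∈ genCylinder X w) (hvw : v.length = w.length) : v = w := by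
  rw [genCylinder, mem_ofPred_eq] at hv hw
  rw [← hv, ← hw, hvw]

lemma mem_genCylinder_iff_of_length_le {v w : List Bool} {x y : X} (hx : x ∈ genCylinder X w)
    (hy : y ∈ genCylinder X w) (hvw : v.length ≤ w.length) :
    x ∈ genCylinder X v ↔ y ∈ genCylinder X v := by
  have hres := PiNat.res_eq_res.1 ((mem_ofPred_eq ▸ hx).trans (mem_ofPred_eq ▸ hy).symm)
  rw [genCylinder, mem_ofPred_eq, mem_ofPred_eq,
    PiNat.res_eq_res.2 fun m hm => hres (hm.trans_le hvw)]

lemma isPiSystem_range_genCylinder : IsPiSystem (range (genCylinder X)) := by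
  rintro _ ⟨v, rfl⟩ _ ⟨w, rfl⟩ ⟨x, hxv, hxw⟩
  wlog hvw : v.length ≤ w.length generalizing v w
  · rw [inter_comm]
    exact this w v hxw hxv (le_of_not_ge hvw)
  · exact ⟨w, (inter_eq_right.2 fun y hy =>
      (mem_genCylinder_iff_of_length_le hxw hy hvw).1 hxv).symm⟩

lemma generateFrom_range_genCylinder :
    MeasurableSpace.generateFrom (range (genCylinder X)) = ‹MeasurableSpace X› := by
  refine le_antisymm ?_ ?_
  · exact MeasurableSpace.generateFrom_le (forall_mem_range.2 measurableSet_genCylinder)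
  · classical
    conv_lhs => rw [← MeasurableSpace.generateFrom_natGeneratingSequence X]
    refine MeasurableSpace.generateFrom_le (forall_mem_range.2 fun n => ?_)
    have : MeasurableSpace.natGeneratingSequence X n =
        ⋃ (w : List Bool) (_ : w.length = n), genCylinder X (true :: w) := by
      ext x
      simp only [genCylinder, mem_iUnion, mem_ofPred_eq]
      constructor
      · exact fun hx => ⟨PiNat.res (MeasurableSpace.mapNatBool X x) n, PiNat.res_length _ _, by
          simpa [MeasurableSpace.mapNatBool] using hx⟩
      · rintro ⟨w, rfl, hx⟩
        rw [List.length_cons, PiNat.res_succ, List.cons.injEq] at hx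
        exact of_decide_eq_true hx.1
    rw [this]
    exact .iUnion fun w => .iUnion fun _ => .basic _ ⟨_, rfl⟩

/-- The Haar functions of `μ` along the cylinders: the constant `1`, and for every cylinder the
indicator of one half of it, corrected by a multiple of the indicator of the cylinder to have mean
zero. -/
noncomputable def haar (μ : Measure X) : Option (List Bool) → X → ℝ
  | none => 1
  | some w => (genCylinder X (true :: w)).indicator 1 -
      (μ.real (genCylinder X (true :: w)) / μ.real (genCylinder X w)) •
        (genCylinder X w).indicator 1

/-- The position of a Haar function: `0` for the constant, and one more than the depth of its
cylinder for the others. -/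
def haarRank : Option (List Bool) → ℕ
  | none => 0
  | some w => w.length + 1

variable {μ : Measure X} {v w : List Bool} {x y : X}

lemma genCylinder_cons_subset (b : Bool) (w : List Bool) :
    genCylinder X (b :: w) ⊆ genCylinder X w := by
  rw [genCylinder_cons]
  exact inter_subset_left

lemma haar_some_of_notMem (hx : x ∉ genCylinder X w) : haar μ (some w) x = 0 := by
  simp only [haar, Pi.sub_apply, Pi.smul_apply, indicator_of_notMem hx,
    indicator_of_notMem fun h => hx (genCylinder_cons_subset true w h), smul_zero, sub_zero]

lemma haar_some_eq (hx : x ∈ genCylinder X w) (hy : y ∈ genCylinder X w)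
    (hvw : v.length < w.length) : haar μ (some v) x = haar μ (some v) y := by
  have hind (u : List Bool) (hu : u.length ≤ w.length) :
      (genCylinder X u).indicator (1 : X → ℝ) x = (genCylinder X u).indicator 1 y := by
    have h := mem_genCylinder_iff_of_length_le hx hy hu
    by_cases hxu : x ∈ genCylinder X u
    · rw [indicator_of_mem hxu, indicator_of_mem (h.1 hxu), Pi.one_apply, Pi.one_apply]
    · rw [indicator_of_notMem hxu, indicator_of_notMem (mt h.2 hxu)]
  simp only [haar, Pi.sub_apply, Pi.smul_apply, hind v hvw.le, hind (true :: v) hvw]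

lemma measurable_haar (i : Option (List Bool)) : Measurable (haar μ i) := by
  cases i with
  | none => exact measurable_const
  | some w =>
    exact (measurable_one.indicator (measurableSet_genCylinder _)).sub
      ((measurable_one.indicator (measurableSet_genCylinder w)).const_smul _)

variable [IsFiniteMeasure μ]

lemma abs_haar_le_one (i : Option (List Bool)) (x : X) : |haar μ i x| ≤ 1 := by
  cases i with
  | none => exact abs_one.le
  | some w =>
    have hr₀ : 0 ≤ μ.real (genCylinder X (true :: w)) / μ.real (genCylinder X w) := by positivity
    have hr₁ : μ.real (genCylinder X (true :: w)) / μ.real (genCylinder X w) ≤ 1 :=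
      div_le_one_of_le₀ (measureReal_mono (genCylinder_cons_subset true w)) measureReal_nonneg
    by_cases hx : x ∈ genCylinder X w
    · rw [abs_le]
      by_cases hx' : x ∈ genCylinder X (true :: w) <;>
        simp only [haar, Pi.sub_apply, Pi.smul_apply, indicator_of_mem, indicator_of_notMem, hx,
          hx', not_false_eq_true, Pi.one_apply, smul_eq_mul, mul_one] <;>
        constructor <;> linarith
    · rw [haar_some_of_notMem hx, abs_zero]
      exact zero_le_one

lemma integral_haar_some (w : List Bool) : ∫ x, haar μ (some w) x ∂μ = 0 := by
  have hind (v : List Bool) : Integrable ((genCylinder X v).indicator (1 : X → ℝ)) μ :=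
    (integrable_const (1 : ℝ)).indicator (measurableSet_genCylinder v)
  simp only [haar]
  rw [integral_sub' (hind _) ((hind w).smul _)]
  simp only [Pi.smul_apply]
  rw [integral_smul, integral_indicator_one (measurableSet_genCylinder _),
    integral_indicator_one (measurableSet_genCylinder _), smul_eq_mul, div_mul_cancel_of_imp,
    sub_self]
  exact fun h => measureReal_mono_null (genCylinder_cons_subset true w) h

lemma isHaarSystem_haar (μ : Measure X) [IsFiniteMeasure μ] : IsHaarSystem μ haarRank (haar μ) where
  measurable := measurable_haar
  abs_le_one := abs_haar_le_one
  integral_eq_zero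
    | some _, none, _, h => absurd h (Nat.not_succ_le_zero _)
    | _, some w, _, _ => integral_haar_some w
  apply_eq
    | none, _, _, _, _, _, _, _ => rfl
    | some _, none, _, h, _, _, _, _ => absurd h (Nat.not_succ_le_zero _)
    | some v, some w, hvw, hr, x, y, hx, hy => by
      have hx := not_imp_comm.1 haar_some_of_notMem hx
      have hy := not_imp_comm.1 haar_some_of_notMem hy
      rcases (Nat.le_of_succ_le_succ hr).lt_or_eq with hlt | heq
      · exact haar_some_eq hx hy hlt
      · have hv (z : X) (hz : z ∈ genCylinder X w) : haar μ (some v) z = 0 :=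
          haar_some_of_notMem fun hzv => hvw (congrArg some (eq_of_mem_genCylinder hzv hz heq))
        rw [hv x hx, hv y hy]

variable {p : ℝ≥0∞}

lemma indicatorConstLp_genCylinder_true_cons (w : List Bool) :
    indicatorConstLp p (measurableSet_genCylinder (true :: w)) (measure_ne_top μ _) (1 : ℂ) =
      (isHaarSystem_haar μ).toLp p (some w) +
        ((μ.real (genCylinder X (true :: w)) / μ.real (genCylinder X w) : ℝ) : ℂ) •
          indicatorConstLp p (measurableSet_genCylinder w) (measure_ne_top μ _) 1 := by
  set r := μ.real (genCylinder X (true :: w)) / μ.real (genCylinder X w)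
  have hcoe (v : List Bool) := indicatorConstLp_coeFn (p := p) (hs := measurableSet_genCylinder v)
    (hμs := measure_ne_top μ _) (c := (1 : ℂ))
  refine Lp.ext ?_
  filter_upwards [hcoe (true :: w), hcoe w, (isHaarSystem_haar μ).coeFn_toLp p (some w),
    Lp.coeFn_add ((isHaarSystem_haar μ).toLp p (some w)) ((r : ℂ) • indicatorConstLp p
      (measurableSet_genCylinder w) (measure_ne_top μ _) 1),
    Lp.coeFn_smul (r : ℂ) (indicatorConstLp p (measurableSet_genCylinder w)
      (measure_ne_top μ _) (1 : ℂ))] with x h₁ h₂ h₃ hadd hsmul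
  rw [hadd, Pi.add_apply, hsmul, Pi.smul_apply, h₁, h₂, h₃]
  by_cases hx : x ∈ genCylinder X w <;> by_cases hx' : x ∈ genCylinder X (true :: w) <;>
    simp [haar, hx, hx', r]

lemma indicatorConstLp_genCylinder_mem_span (w : List Bool) :
    indicatorConstLp p (measurableSet_genCylinder w) (measure_ne_top μ _) (1 : ℂ) ∈
      Submodule.span ℂ (range ((isHaarSystem_haar μ).toLp p)) := by
  induction w with
  | nil =>
    refine Submodule.subset_span ⟨none, Lp.ext ?_⟩
    filter_upwards [(isHaarSystem_haar μ).coeFn_toLp p none,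
      indicatorConstLp_coeFn (p := p) (hs := measurableSet_genCylinder []) (μ := μ)
        (hμs := measure_ne_top μ _) (c := (1 : ℂ))] with x hx hx'
    rw [hx, hx', genCylinder_nil, indicator_univ]
    exact Complex.ofReal_one
  | cons b w ih =>
    have htrue : indicatorConstLp p (measurableSet_genCylinder (true :: w)) (measure_ne_top μ _)
        (1 : ℂ) ∈ Submodule.span ℂ (range ((isHaarSystem_haar μ).toLp p)) := by
      rw [indicatorConstLp_genCylinder_true_cons]
      exact add_mem (Submodule.subset_span ⟨_, rfl⟩) (Submodule.smul_mem _ _ ih)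
    cases b with
    | true => exact htrue
    | false =>
      have hdisj : Disjoint (genCylinder X (true :: w)) (genCylinder X (false :: w)) :=
        disjoint_left.2 fun x hx hx' => by
          simpa using eq_of_mem_genCylinder hx hx' rfl
      have hunion : genCylinder X (true :: w) ∪ genCylinder X (false :: w) = genCylinder X w := by
        rw [genCylinder_cons, genCylinder_cons, ← inter_union_distrib_left]
        refine inter_eq_left.2 fun x _ => ?_
        exact Bool.dichotomy _ |>.symm
      have h := indicatorConstLp_disjoint_union (p := p) (measurableSet_genCylinder (true :: w))
        (measurableSet_genCylinder (false :: w)) (measure_ne_top μ _) (measure_ne_top μ _) hdisj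
        (1 : ℂ)
      simp only [hunion] at h
      exact (Submodule.add_mem_iff_right _ htrue).1 (h ▸ ih)

theorem dense_span_toLp_haar [Fact (1 ≤ p)] (hp' : p ≠ ⊤) :
    Dense (Submodule.span ℂ (range ((isHaarSystem_haar μ).toLp p)) : Set (Lp ℂ p μ)) := by
  rw [Submodule.dense_iff_topologicalClosure_eq_top]
  have hclosed :=
    (Submodule.span ℂ (range ((isHaarSystem_haar μ).toLp p))).isClosed_topologicalClosure
  refine submodule_eq_top_of_indicatorConstLp_mem hp' hclosed <|
    indicatorConstLp_mem_of_isPiSystem hp' hclosed generateFrom_range_genCylinder.symm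
      isPiSystem_range_genCylinder ?_ ?_
  · simpa only [genCylinder_nil] using Submodule.le_topologicalClosure _
      (indicatorConstLp_genCylinder_mem_span (μ := μ) (p := p) [])
  · rintro _ ⟨w, rfl⟩ _
    exact Submodule.le_topologicalClosure _ (indicatorConstLp_genCylinder_mem_span w)

end CountablyGenerated

/-! ### Orthogonal signs on an atomless space -/

lemma continuous_measureReal_Iic (ν : Measure ℝ) [IsFiniteMeasure ν] [NullSingletonClass ν] :
    Continuous fun t => ν.real (Iic t) := by
  have hint (a b : ℝ) : IntervalIntegrable (fun _ => (1 : ℝ)) ν a b :=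
    ⟨integrableOn_const, integrableOn_const⟩
  refine ((continuous_const (y := ν.real (Iic 0))).add
    (intervalIntegral.continuous_primitive hint 0)).congr fun t => ?_
  have h := intervalIntegral.integral_Iic_sub_Iic (μ := ν) (f := fun _ => (1 : ℝ))
    (a := 0) (b := t) integrableOn_const integrableOn_const
  rw [setIntegral_const, setIntegral_const] at h
  simpa using congrArg (ν.real (Iic 0) + ·) h.symm

lemma exists_measureReal_Iic_eq_half (ν : Measure ℝ) [IsFiniteMeasure ν] [NullSingletonClass ν]
    (hν : ν ≠ 0) : ∃ t, ν.real (Iic t) = ν.real univ / 2 := by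
  have hpos : 0 < ν.real univ := by
    have : NeZero ν := ⟨hν⟩
    exact measureReal_univ_pos
  have htop : Tendsto (fun t => ν.real (Iic t)) atTop (𝓝 (ν.real univ)) :=
    (ENNReal.tendsto_toReal (measure_ne_top ν univ)).comp (tendsto_measure_Iic_atTop ν)
  have hbot : Tendsto (fun t => ν.real (Iic t)) atBot (𝓝 0) := by
    have h := tendsto_measure_iInter_atBot (μ := ν) (s := fun t : ℝ => Iic t)
      (fun _ => measurableSet_Iic.nullMeasurableSet) (fun _ _ hst => Iic_subset_Iic.2 hst)
      ⟨0, measure_ne_top ν _⟩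
    rw [iInter_Iic_eq_empty_iff.2 (by simp), measure_empty] at h
    exact (ENNReal.tendsto_toReal ENNReal.zero_ne_top).comp h
  obtain ⟨a, ha⟩ := (hbot.eventually_lt_const (half_pos hpos)).exists
  obtain ⟨b, hb⟩ := (htop.eventually_const_lt (half_lt_self hpos)).exists
  exact mem_range_of_exists_le_of_exists_ge (continuous_measureReal_Iic ν) ⟨a, ha.le⟩ ⟨b, hb.le⟩

lemma sum_mul_sq {ι R : Type*} [Fintype ι] [CommSemiring R] (a b : ι → R) :
    (∑ i, a i * b i) ^ 2 = ∑ i, ∑ j, a i * a j * (b i * b j) := by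
  rw [sq, Finset.sum_mul_sum]
  exact Finset.sum_congr rfl fun i _ => Finset.sum_congr rfl fun j _ => mul_mul_mul_comm ..

section Signs

variable {X : Type*} [MeasurableSpace X] {μ : Measure X}

/-- Measurable signs that are pairwise orthogonal in `L²(μ)`. -/
structure IsOrthogonalSigns {ι : Type*} (μ : Measure X) (r : ι → X → ℝ) : Prop where
  measurable (i : ι) : Measurable (r i)
  eq_or_eq_neg (i : ι) (x : X) : r i x = 1 ∨ r i x = -1
  integral_mul_eq_zero {i j : ι} (hij : i ≠ j) : ∫ x, r i x * r j x ∂μ = 0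

namespace IsOrthogonalSigns

variable {ι : Type*} {r : ι → X → ℝ}

lemma abs_eq_one (hr : IsOrthogonalSigns μ r) (i : ι) (x : X) : |r i x| = 1 :=
  (abs_eq_abs.2 (hr.eq_or_eq_neg i x)).trans abs_one

lemma integral_mul_self (hr : IsOrthogonalSigns μ r) (i : ι) :
    ∫ x, r i x * r i x ∂μ = μ.real univ := by
  simp [← sq, ← sq_abs (r i _), hr.abs_eq_one]

lemma abs_sum_mul_le [Fintype ι] (hr : IsOrthogonalSigns μ r) {a : ι → ℝ}
    (ha : ∀ i, |a i| ≤ 1) (x : X) :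
    |∑ i, a i * r i x| ≤ Fintype.card ι :=
  calc |∑ i, a i * r i x| ≤ ∑ i, |a i * r i x| := Finset.abs_sum_le_sum_abs _ _
    _ ≤ ∑ _i : ι, 1 := by
        gcongr with i
        simpa [abs_mul, hr.abs_eq_one] using ha i
    _ = Fintype.card ι := by simp

end IsOrthogonalSigns

variable [IsFiniteMeasure μ]

lemma exists_measurableSet_measureReal_inter_eq_half [MeasurableSpace.CountablySeparated X]
    [NullSingletonClass μ] (E : Set X) :
    ∃ A, MeasurableSet A ∧ μ.real (E ∩ A) = μ.real E / 2 := by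
  obtain ⟨c, hc, hc_inj⟩ := MeasurableSpace.measurable_injection_nat_bool_of_countablySeparated X
  let φ : X → ℝ := embeddingReal (ℕ → Bool) ∘ c
  have hφ : Measurable φ := (measurableEmbedding_embeddingReal _).measurable.comp hc
  have hφ_inj : φ.Injective := (measurableEmbedding_embeddingReal _).injective.comp hc_inj
  have hreal {s : Set ℝ} (hs : MeasurableSet s) :
      ((μ.restrict E).map φ).real s = μ.real (E ∩ φ ⁻¹' s) := by
    rw [map_measureReal_apply hφ hs, measureReal_restrict_apply (hφ hs), inter_comm]
  have : NullSingletonClass ((μ.restrict E).map φ) := ⟨fun t => by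
    rw [Measure.map_apply hφ (measurableSet_singleton t)]
    exact (subsingleton_singleton.preimage hφ_inj).measure_zero _⟩
  by_cases h : (μ.restrict E).map φ = 0
  · have hE : μ.real E = 0 := by simpa [h] using (hreal .univ).symm
    exact ⟨∅, .empty, by simp [hE]⟩
  · obtain ⟨t, ht⟩ := exists_measureReal_Iic_eq_half _ h
    refine ⟨φ ⁻¹' Iic t, hφ measurableSet_Iic, ?_⟩
    rw [← hreal measurableSet_Iic, ht, hreal .univ, preimage_univ, inter_univ]

lemma exists_measurableSet_forall_fiber_eq_half [MeasurableSpace.CountablySeparated X]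
    [NullSingletonClass μ] {α : Type*} [Countable α] [MeasurableSpace α]
    [MeasurableSingletonClass α] {c : X → α} (hc : Measurable c) :
    ∃ B, MeasurableSet B ∧ ∀ a, μ.real (c ⁻¹' {a} ∩ B) = μ.real (c ⁻¹' {a}) / 2 := by
  choose A hA hA_half using fun a =>
    exists_measurableSet_measureReal_inter_eq_half (μ := μ) (c ⁻¹' {a})
  refine ⟨⋃ a, c ⁻¹' {a} ∩ A a, .iUnion fun a => (hc (measurableSet_singleton a)).inter (hA a),
    fun a => ?_⟩
  rw [← hA_half a]
  congr 1
  ext x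
  simp only [mem_inter_iff, mem_iUnion, mem_preimage, mem_singleton_iff]
  grind

lemma exists_sign_integral_comp_mul_eq_zero [MeasurableSpace.CountablySeparated X]
    [NullSingletonClass μ] {α : Type*} [Finite α] [MeasurableSpace α]
    [MeasurableSingletonClass α] {c : X → α} (hc : Measurable c) :
    ∃ s : X → ℝ, Measurable s ∧ (∀ x, s x = 1 ∨ s x = -1) ∧
      ∀ f : α → ℝ, ∫ x, f (c x) * s x ∂μ = 0 := by
  have := Fintype.ofFinite α
  obtain ⟨B, hB, hB_half⟩ := exists_measurableSet_forall_fiber_eq_half (μ := μ) hc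
  let s (x : X) : ℝ := B.indicator 1 x - Bᶜ.indicator 1 x
  have hint (A : Set X) (hA : MeasurableSet A) : Integrable (A.indicator (1 : X → ℝ)) μ :=
    (integrable_const 1).indicator hA
  have hfiber (a : α) : MeasurableSet (c ⁻¹' {a}) := hc (measurableSet_singleton a)
  have hs_fiber (a : α) : ∫ x in c ⁻¹' {a}, s x ∂μ = 0 :=
    calc ∫ x in c ⁻¹' {a}, s x ∂μ
        = μ.real (c ⁻¹' {a} ∩ B) - μ.real (c ⁻¹' {a} \ B) := by
          rw [integral_sub (hint B hB).integrableOn (hint Bᶜ hB.compl).integrableOn,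
            setIntegral_indicator hB, setIntegral_indicator hB.compl]
          simp [sdiff_eq]
      _ = 0 := by
          linarith [hB_half a, measureReal_inter_add_sdiff (μ := μ) (s := c ⁻¹' {a}) hB]
  refine ⟨s, (measurable_const.indicator hB).sub (measurable_const.indicator hB.compl),
    fun x => ?_, fun f => ?_⟩
  · by_cases hx : x ∈ B <;> simp [s, hx]
  · have hfs (a : α) : EqOn (fun x => f (c x) * s x) (fun x => f a * s x) (c ⁻¹' {a}) :=
      fun x hx => by simp only [mem_singleton_iff.1 hx]
    have hcover : univ = ⋃ a, c ⁻¹' {a} := by ext x; simp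
    rw [← setIntegral_univ, hcover, integral_iUnion_fintype hfiber
      (fun a b hab => Disjoint.preimage c (disjoint_singleton.2 hab)) fun a =>
        IntegrableOn.congr_fun (((hint B hB).sub (hint Bᶜ hB.compl)).const_mul _).integrableOn
          (hfs a).symm (hfiber a)]
    refine Finset.sum_eq_zero fun a _ => ?_
    rw [setIntegral_congr_fun (hfiber a) (hfs a), integral_const_mul, hs_fiber, mul_zero]

lemma exists_isOrthogonalSigns [MeasurableSpace.CountablySeparated X] [NullSingletonClass μ]
    (N : ℕ) : ∃ r : Fin N → X → ℝ, IsOrthogonalSigns μ r := by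
  induction N with
  | zero => exact ⟨0, nofun, nofun, fun {i} => i.elim0⟩
  | succ N ih =>
    obtain ⟨r, hr⟩ := ih
    let c (x : X) (i : Fin N) : Bool := decide (r i x = 1)
    have hc : Measurable c := measurable_pi_lambda _ fun i =>
      measurable_to_bool (by simpa [c, preimage] using hr.measurable i (measurableSet_singleton 1))
    obtain ⟨s, hs, hs_sign, hs_orth⟩ := exists_sign_integral_comp_mul_eq_zero (μ := μ) hc
    have hrs (i : Fin N) : ∫ x, r i x * s x ∂μ = 0 := by
      rw [← hs_orth fun b => if b i then 1 else -1]
      congr! 3 with x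
      rcases hr.eq_or_eq_neg i x with h | h <;> norm_num [c, h]
    refine ⟨Fin.snoc r s, ?_, ?_, ?_⟩
    · exact Fin.forall_fin_succ'.2 (by simpa using ⟨hr.measurable, hs⟩)
    · exact Fin.forall_fin_succ'.2 (by simpa using ⟨hr.eq_or_eq_neg, hs_sign⟩)
    · intro i j hij
      induction i using Fin.lastCases <;> induction j using Fin.lastCases
      · exact absurd rfl hij
      · simpa [mul_comm] using hrs _
      · simpa using hrs _
      · simpa using hr.integral_mul_eq_zero (by simpa using hij)

namespace IsOrthogonalSigns

variable {ι : Type*} {r : ι → X → ℝ}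

lemma integrable_mul (hr : IsOrthogonalSigns μ r) (i j : ι) :
    Integrable (fun x => r i x * r j x) μ :=
  .of_bound ((hr.measurable i).mul (hr.measurable j)).aestronglyMeasurable 1
    (.of_forall fun x => by simp [hr.abs_eq_one])

variable [Fintype ι]

lemma integrable_sum_mul_sq (hr : IsOrthogonalSigns μ r) (a : ι → ℝ) :
    Integrable (fun x => (∑ i, a i * r i x) ^ 2) μ := by
  simp only [sum_mul_sq]
  exact integrable_finsetSum _ fun i _ => integrable_finsetSum _ fun j _ =>
    (hr.integrable_mul i j).const_mul _

lemma integral_sum_mul_sq_le (hr : IsOrthogonalSigns μ r) {a : ι → ℝ} (ha : ∀ i, |a i| ≤ 1) :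
    ∫ x, (∑ i, a i * r i x) ^ 2 ∂μ ≤ Fintype.card ι * μ.real univ := by
  have hint (i j : ι) : Integrable (fun x => a i * a j * (r i x * r j x)) μ :=
    (hr.integrable_mul i j).const_mul _
  calc ∫ x, (∑ i, a i * r i x) ^ 2 ∂μ
      = ∑ i, ∑ j, a i * a j * ∫ x, r i x * r j x ∂μ := by
        simp only [sum_mul_sq]
        rw [integral_finsetSum _ fun i _ => integrable_finsetSum _ fun j _ => hint i j]
        refine Finset.sum_congr rfl fun i _ => ?_
        rw [integral_finsetSum _ fun j _ => hint i j]
        simp only [integral_const_mul]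
    _ = ∑ i, a i ^ 2 * μ.real univ := by
        refine Finset.sum_congr rfl fun i _ => ?_
        rw [Fintype.sum_eq_single i fun j hj => by rw [hr.integral_mul_eq_zero hj.symm, mul_zero],
          hr.integral_mul_self, sq]
    _ ≤ ∑ _i : ι, 1 * μ.real univ := by
        gcongr with i
        exact (sq_le_one_iff_abs_le_one _).2 (ha i)
    _ = Fintype.card ι * μ.real univ := by simp

end IsOrthogonalSigns

lemma rpow_le_rpow_add_sq_div_sq {s η q : ℝ} (hs : 0 ≤ s) (hs' : s ≤ 1) (hη : 0 < η)
    (hq : 0 ≤ q) : s ^ q ≤ η ^ q + s ^ 2 / η ^ 2 := by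
  rcases le_total s η with h | h
  · exact (Real.rpow_le_rpow hs h hq).trans (le_add_of_nonneg_right (by positivity))
  · calc s ^ q ≤ 1 := Real.rpow_le_one hs hs' hq
      _ ≤ s ^ 2 / η ^ 2 := (one_le_div (by positivity)).2 (by gcongr)
      _ ≤ η ^ q + s ^ 2 / η ^ 2 := le_add_of_nonneg_left (by positivity)

section

variable {p : ℝ≥0∞} [Fact (1 ≤ p)]

lemma lp_norm_rpow_le_add_integral_sq_div (hp : p ≠ ⊤) {f : Lp ℂ p μ}
    (hf : ∀ᵐ x ∂μ, ‖f x‖ ≤ 1) {η : ℝ} (hη : 0 < η) :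
    ‖f‖ ^ p.toReal ≤ μ.real univ * η ^ p.toReal + (∫ x, ‖f x‖ ^ 2 ∂μ) / η ^ 2 := by
  have hp₀ : p ≠ 0 := (one_pos.trans_le Fact.out).ne'
  have hsq : Integrable (fun x => ‖f x‖ ^ 2 / η ^ 2) μ :=
    (Integrable.of_bound ((Lp.aestronglyMeasurable f).norm.pow 2) 1
      (hf.mono fun x hx => by simpa using hx)).div_const _
  calc ‖f‖ ^ p.toReal = ∫ x, ‖f x‖ ^ p.toReal ∂μ := lp_norm_rpow_toReal hp₀ hp f
    _ ≤ ∫ x, (η ^ p.toReal + ‖f x‖ ^ 2 / η ^ 2) ∂μ :=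
        integral_mono_ae ((Lp.memLp f).integrable_norm_rpow hp₀ hp)
          ((integrable_const _).add hsq)
          (hf.mono fun x hx => rpow_le_rpow_add_sq_div_sq (norm_nonneg _) hx hη toReal_nonneg)
    _ = μ.real univ * η ^ p.toReal + (∫ x, ‖f x‖ ^ 2 ∂μ) / η ^ 2 := by
        rw [integral_add (integrable_const _) hsq, integral_const, smul_eq_mul, integral_div]

lemma exists_forall_lp_norm_le_of_integral_sq_le (hp : p ≠ ⊤) {ε : ℝ} (hε : 0 < ε) :
    ∃ δ > 0, ∀ f : Lp ℂ p μ, (∀ᵐ x ∂μ, ‖f x‖ ≤ 1) → ∫ x, ‖f x‖ ^ 2 ∂μ ≤ δ → ‖f‖ ≤ ε := by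
  have hq : 0 < p.toReal := toReal_pos (one_pos.trans_le Fact.out).ne' hp
  have hη : Tendsto (fun η : ℝ => μ.real univ * η ^ p.toReal) (𝓝[>] 0) (𝓝 0) := by
    have h : ContinuousAt (fun η : ℝ => μ.real univ * η ^ p.toReal) 0 :=
      continuousAt_const.mul (Real.continuousAt_rpow_const _ _ (.inr hq.le))
    simpa [ContinuousAt, Real.zero_rpow hq.ne'] using h.tendsto.mono_left nhdsWithin_le_nhds
  obtain ⟨η, hηε, hη⟩ := ((hη.eventually_lt_const (half_pos (Real.rpow_pos_of_pos hε p.toReal))).and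
    self_mem_nhdsWithin).exists
  refine ⟨ε ^ p.toReal / 2 * η ^ 2, by positivity, fun f hf hf_sq => ?_⟩
  refine (Real.rpow_le_rpow_iff (norm_nonneg _) hε.le hq).1 ?_
  have h := (div_le_iff₀ (pow_pos hη 2)).2 hf_sq
  linarith [lp_norm_rpow_le_add_integral_sq_div hp hf hη]

lemma exists_isOrthogonalSigns_lp_norm_le [MeasurableSpace.CountablySeparated X]
    [NullSingletonClass μ] (hp : p ≠ ⊤) {ε : ℝ} (hε : 0 < ε) :
    ∃ N : ℕ, 0 < N ∧ ∃ r : Fin N → X → ℝ, IsOrthogonalSigns μ r ∧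
      ∀ a : Fin N → ℝ, (∀ k, |a k| ≤ 1) → ∀ f : Lp ℂ p μ,
        (∀ᵐ x ∂μ, ‖f x‖ ≤ |∑ k, a k * r k x|) → ‖f‖ ≤ N * ε := by
  obtain ⟨δ, hδ, hsmall⟩ := exists_forall_lp_norm_le_of_integral_sq_le (μ := μ) hp hε
  obtain ⟨N, hN⟩ := exists_nat_gt (μ.real univ / δ)
  have hN₀ : (0 : ℝ) < N := (div_nonneg measureReal_nonneg hδ.le).trans_lt hN
  obtain ⟨r, hr⟩ := exists_isOrthogonalSigns (μ := μ) N
  refine ⟨N, Nat.cast_pos.1 hN₀, r, hr, fun a ha f hf => ?_⟩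
  have hcoe : ∀ᵐ x ∂μ, ‖((N : ℂ)⁻¹ • f) x‖ ≤ (N : ℝ)⁻¹ * |∑ k, a k * r k x| := by
    filter_upwards [hf, Lp.coeFn_smul (N : ℂ)⁻¹ f] with x hx hx'
    simpa [hx'] using mul_le_mul_of_nonneg_left hx (inv_nonneg.2 hN₀.le)
  have hscaled : ‖(N : ℂ)⁻¹ • f‖ ≤ ε := by
    refine hsmall _ (hcoe.mono fun x hx => hx.trans ?_) ?_
    · exact (inv_mul_le_one₀ hN₀).2 (by simpa using hr.abs_sum_mul_le ha x)
    calc ∫ x, ‖((N : ℂ)⁻¹ • f) x‖ ^ 2 ∂μ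
        ≤ ∫ x, (N : ℝ)⁻¹ ^ 2 * (∑ k, a k * r k x) ^ 2 ∂μ := by
          refine integral_mono_of_nonneg (.of_forall fun x => sq_nonneg _)
            ((hr.integrable_sum_mul_sq a).const_mul _) (hcoe.mono fun x hx => ?_)
          simpa only [mul_pow, sq_abs] using pow_le_pow_left₀ (norm_nonneg _) hx 2
      _ ≤ (N : ℝ)⁻¹ ^ 2 * (N * μ.real univ) := by
          rw [integral_const_mul]
          gcongr
          simpa using hr.integral_sum_mul_sq_le ha
      _ = μ.real univ / N := by field_simp
      _ ≤ δ := (div_lt_comm₀ hN₀ hδ).2 hN |>.le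
  have hNf : f = (N : ℂ) • (N : ℂ)⁻¹ • f :=
    (smul_inv_smul₀ (Nat.cast_ne_zero.2 (Nat.cast_pos.1 hN₀).ne') f).symm
  rw [hNf, norm_smul, Complex.norm_natCast]
  gcongr

end

end Signs

/-! ### Averaging unimodular functions -/

lemma exists_measurable_norm_add_mul_eq_one :
    ∃ v : ℂ → ℂ, Measurable v ∧ (∀ z, ‖v z‖ ≤ 1) ∧
      ∀ z, ‖z‖ ≤ 1 → ∀ s : ℝ, |s| = 1 → ‖z + s • v z‖ = 1 := by
  -- `v z` is orthogonal to `z`, so that both points `z ± v z` lie on the unit circle.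
  refine ⟨fun z => Complex.exp (z.arg * Complex.I) * (√(1 - ‖z‖ ^ 2) * Complex.I),
    by fun_prop, fun z => ?_, fun z hz s hs => ?_⟩
  · have hroot : √(1 - ‖z‖ ^ 2) ≤ 1 := Real.sqrt_le_one.2 (sub_le_self _ (sq_nonneg _))
    simp [Complex.norm_exp_ofReal_mul_I, abs_of_nonneg (Real.sqrt_nonneg _), hroot]
  · have hroot : √(1 - ‖z‖ ^ 2) ^ 2 = 1 - ‖z‖ ^ 2 :=
      Real.sq_sqrt (sub_nonneg.2 (pow_le_one₀ (norm_nonneg z) hz))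
    have hs_sq : s ^ 2 = 1 := by rw [← sq_abs, hs, one_pow]
    have hpolar : z + s • (Complex.exp (z.arg * Complex.I) * (√(1 - ‖z‖ ^ 2) * Complex.I)) =
        Complex.exp (z.arg * Complex.I) *
          (((‖z‖ : ℝ) : ℂ) + ((s * √(1 - ‖z‖ ^ 2) : ℝ) : ℂ) * Complex.I) := by
      rw [mul_add, mul_comm _ ((‖z‖ : ℝ) : ℂ), Complex.norm_mul_exp_arg_mul_I, Complex.real_smul]
      push_cast
      ring
    rw [hpolar, norm_mul, Complex.norm_exp_ofReal_mul_I, one_mul, Complex.norm_add_mul_I, mul_pow,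
      hs_sq, hroot]
    simp

section Blocks

variable {X : Type*} [MeasurableSpace X] [MeasurableSpace.CountablySeparated X] {μ : Measure X}
  [IsFiniteMeasure μ] [NullSingletonClass μ] {p : ℝ≥0∞} [Fact (1 ≤ p)]

lemma exists_norm_add_smul_eq_one {h : Lp ℂ p μ} (hh : ∀ᵐ x ∂μ, ‖h x‖ ≤ 1) (hp : p ≠ ⊤) {ε : ℝ}
    (hε : 0 < ε) : ∃ N : ℕ, 0 < N ∧ ∃ d : Fin N → Lp ℂ p μ,
      (∀ k (s : ℝ), |s| = 1 → ∀ᵐ x ∂μ, ‖(h + s • d k) x‖ = 1) ∧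
      ∀ a : Fin N → ℝ, (∀ k, |a k| ≤ 1) → ‖∑ k, a k • d k‖ ≤ N * ε := by
  obtain ⟨N, hN, r, hr, hr_small⟩ := exists_isOrthogonalSigns_lp_norm_le (μ := μ) hp hε
  obtain ⟨v, hv, hv_le, hv_one⟩ := exists_measurable_norm_add_mul_eq_one
  have hmem (k : Fin N) : MemLp (fun x => r k x • v (h x)) p μ := by
    refine MemLp.of_bound ((hr.measurable k).aestronglyMeasurable.smul
      (hv.comp_aemeasurable (Lp.aestronglyMeasurable h).aemeasurable).aestronglyMeasurable) 1 ?_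
    exact .of_forall fun x => by simpa [norm_smul, hr.abs_eq_one] using hv_le (h x)
  refine ⟨N, hN, fun k => (hmem k).toLp, fun k s hs => ?_, fun a ha => hr_small a ha _ ?_⟩
  · filter_upwards [hh, Lp.coeFn_add h (s • (hmem k).toLp), Lp.coeFn_smul s (hmem k).toLp,
      (hmem k).coeFn_toLp] with x hx hadd hsmul hd
    rw [hadd, Pi.add_apply, hsmul, Pi.smul_apply, hd, smul_smul]
    exact hv_one _ hx _ (by rw [abs_mul, hs, hr.abs_eq_one, one_mul])
  · filter_upwards [lp_coeFn_sum Finset.univ fun k => a k • (hmem k).toLp,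
      ae_all_iff.2 fun k => Lp.coeFn_smul (a k) (hmem k).toLp,
      ae_all_iff.2 fun k => (hmem k).coeFn_toLp] with x hsum hsmul hd
    simp only [hsum, hsmul, Pi.smul_apply, hd, smul_smul, ← Finset.sum_smul, norm_smul,
      Real.norm_eq_abs]
    exact mul_le_of_le_one_right (abs_nonneg _) (hv_le _)

lemma exists_unimodular_family_average_eq {h : Lp ℂ p μ} (hh : ∀ᵐ x ∂μ, ‖h x‖ ≤ 1) (hp : p ≠ ⊤)
    {δ : ℝ} (hδ : 0 < δ) : ∃ N : ℕ, 0 < N ∧ ∃ g : Fin N × Bool → Lp ℂ p μ,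
      (∀ k, ∀ᵐ x ∂μ, ‖g k x‖ = 1) ∧ ∑ k, g k = Fintype.card (Fin N × Bool) • h ∧
      ∀ F : Finset (Fin N × Bool),
        ‖∑ k ∈ F, (g k - h)‖ ≤ Fintype.card (Fin N × Bool) * δ := by
  classical
  obtain ⟨N, hN, d, hd_one, hd_small⟩ := exists_norm_add_smul_eq_one hh hp hδ
  let sign (b : Bool) : ℝ := cond b 1 (-1)
  refine ⟨N, hN, fun k => h + sign k.2 • d k.1, fun k => hd_one _ _ ?_, ?_, fun F => ?_⟩
  · cases k.2 <;> simp [sign]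
  · simp [Fintype.sum_prod_type, Finset.sum_add_distrib, sign]
  · let a (k : Fin N) : ℝ := ∑ b, if (k, b) ∈ F then sign b else 0
    have ha (k : Fin N) : |a k| ≤ 1 := by
      simp only [a, Fintype.sum_bool, sign]
      split_ifs <;> norm_num
    calc ‖∑ k ∈ F, (h + sign k.2 • d k.1 - h)‖ = ‖∑ k, a k • d k‖ := by
          simp only [add_sub_cancel_left, a, Finset.sum_smul, ite_smul, zero_smul,
            ← Fintype.sum_prod_type', Prod.mk.eta, Finset.sum_ite_mem, Finset.univ_inter]
      _ ≤ N * δ := hd_small a ha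
      _ ≤ Fintype.card (Fin N × Bool) * δ := by
          gcongr
          rw [Fintype.card_prod, Fintype.card_fin]
          exact Nat.le_mul_of_pos_right N Fintype.card_pos

end Blocks

section

variable {X : Type*} [MeasurableSpace X] {μ : Measure X} [IsFiniteMeasure μ] {p : ℝ≥0∞}
  [Fact (1 ≤ p)]

theorem IsUnconditionalFrame.exists_unimodular [MeasurableSpace.CountablySeparated X]
    [NullSingletonClass μ] {ι : Type*} [Countable ι] [Infinite ι] {h : ι → Lp ℂ p μ}
    {hs : ι → Lp ℂ p μ →L[ℂ] ℂ} (hh : IsUnconditionalFrame h hs)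
    (hle : ∀ i, ∀ᵐ x ∂μ, ‖h i x‖ ≤ 1) (hp : p ≠ ⊤) :
    ∃ (g : ℕ → Lp ℂ p μ) (gs : ℕ → Lp ℂ p μ →L[ℂ] ℂ),
      (∀ n, ∀ᵐ x ∂μ, ‖g n x‖ = 1) ∧ IsUnconditionalFrame g gs := by
  obtain ⟨ε, hε, _, hε_sum, -⟩ := NNReal.exists_pos_sum_of_countable one_ne_zero ι
  let δ (i : ι) : ℝ := ε i / (‖hs i‖ + 1)
  have hδ (i : ι) : 0 < δ i := div_pos (hε i) (by positivity)
  have hsum : Summable fun i => ‖hs i‖ * δ i := by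
    refine .of_nonneg_of_le (fun i => by have := hδ i; positivity) (fun i => ?_)
      (NNReal.summable_coe.2 hε_sum.summable)
    rw [mul_div_left_comm]
    exact mul_le_of_le_one_right (ε i).2 (div_le_one_of_le₀ (by linarith) (by positivity))
  choose N hN u hu_one hu_sum hu_small using fun i =>
    exists_unimodular_family_average_eq (hle i) hp (hδ i)
  have (i : ι) : Nonempty (Fin (N i)) := ⟨⟨0, hN i⟩⟩
  obtain ⟨e⟩ := nonempty_equiv_of_countable (α := ℕ) (β := Σ i, Fin (N i) × Bool)
  exact ⟨_, _, fun n => hu_one _ _, (hh.sigma hu_sum hu_small hsum).comp_equiv e⟩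

lemma exists_unimodular_isUnconditionalFrame_of_subsingleton [Subsingleton X] :
    ∃ (g : ℕ → Lp ℂ p μ) (gs : ℕ → Lp ℂ p μ →L[ℂ] ℂ),
      (∀ n, ∀ᵐ x ∂μ, ‖g n x‖ = 1) ∧ IsUnconditionalFrame g gs := by
  obtain ⟨L, hL⟩ := exists_clm_eq_integral_mul (p := p)
    (memLp_const (μ := μ) (p := ⊤) ((μ.real univ : ℂ)⁻¹))
  have hL_smul (f : Lp ℂ p μ) : L f • Lp.const p μ (1 : ℂ) = f := by
    rcases eq_zero_or_neZero μ with rfl | _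
    · exact Lp.ext (by simp [EventuallyEq])
    refine Lp.ext ?_
    filter_upwards [Lp.coeFn_smul (L f) (Lp.const p μ (1 : ℂ)), Lp.coeFn_const p μ (1 : ℂ)]
      with x hx hx'
    have hf : ⇑f = fun _ => f x := funext fun y => by rw [Subsingleton.elim y x]
    have hμ : (μ.real univ : ℂ) ≠ 0 := Complex.ofReal_ne_zero.2 measureReal_univ_pos.ne'
    rw [hx, Pi.smul_apply, hx', hL, hf, integral_const, Complex.real_smul]
    simp [mul_left_comm, hμ]
  refine ⟨fun _ => Lp.const p μ 1, Pi.single 0 L, fun _ => ?_, fun f => ?_⟩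
  · filter_upwards [Lp.coeFn_const p μ (1 : ℂ)] with x hx
    rw [hx, Function.const_apply, norm_one]
  · convert hasSum_single 0 fun n hn => ?_
    · simp [hL_smul]
    · simp [hn]

end

theorem stmt7_general {X : Type*} [MeasurableSpace X] [MeasurableSpace.CountablyGenerated X]
    [MeasurableSpace.SeparatesPoints X] (μ : Measure X) [IsFiniteMeasure μ]
    (hμ : NullSingletonClass μ ∨ Subsingleton X) {p : ℝ≥0∞} [Fact (1 ≤ p)] (hp : 1 < p)
    (hp' : p ≠ ⊤) :
    ∃ (g : ℕ → Lp ℂ p μ) (gs : ℕ → Lp ℂ p μ →L[ℂ] ℂ),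
      (∀ n, ∀ᵐ x ∂μ, ‖g n x‖ = 1) ∧ ∀ f, HasSum (fun n => gs n f • g n) f := by
  rcases hμ with _ | _
  · have hh := isHaarSystem_haar μ
    obtain ⟨hs, hframe⟩ := hh.exists_isUnconditionalFrame hp hp' (dense_span_toLp_haar hp')
    refine hframe.exists_unimodular (fun i => ?_) hp'
    filter_upwards [hh.coeFn_toLp p i] with x hx
    simpa [hx] using hh.abs_le_one i x
  · exact exists_unimodular_isUnconditionalFrame_of_subsingleton

/-- For `Ω ⊂ ℝ^d` of positive finite measure and `p > 1` there is an
unconditional Schauder frame `{(g_n, g_n*)}` in `L^p(Ω)` with every `g_n`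
unimodular, i.e. `|g_n(x)| = 1` a.e. on `Ω`. -/
theorem stmt7 (d : ℕ) (Ω : Set (EuclideanSpace ℝ (Fin d))) (hΩmeas : MeasurableSet Ω)
    (hΩpos : 0 < volume Ω) (hΩfin : volume Ω < ⊤)
    (p : ℝ) (hp : 1 < p) [Fact (1 ≤ ENNReal.ofReal p)] :
    ∃ (g : ℕ → Lp ℂ (ENNReal.ofReal p) (volume.restrict Ω))
      (gs : ℕ → Lp ℂ (ENNReal.ofReal p) (volume.restrict Ω) →L[ℂ] ℂ),
      (∀ n, ∀ᵐ x ∂(volume.restrict Ω), ‖g n x‖ = 1) ∧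
      ∀ f, HasSum (fun n => gs n f • g n) f := by
  have : IsFiniteMeasure (volume.restrict Ω) := isFiniteMeasure_restrict.2 hΩfin.ne
  refine stmt7_general _ ?_ (ENNReal.one_lt_ofReal.2 hp) ofReal_ne_top
  obtain h | h := subsingleton_or_nontrivial (EuclideanSpace ℝ (Fin d))
  exacts [.inr h, .inl inferInstance]
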